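/- Let n ≥ 1, let a ∈ (0,∞)ⁿ have pairwise distinct entries, and let s ∈ ℂⁿ have pairwise distinct entries with Re(s_j − s_{j+1}) ≥ 2 for all j = 1,…,n−1. Then f_n(s, D(1)) ≠ 0 and f_n(s, D(a)) / f_n(s, D(1)) = (∏_{j=0}^{n−1} 2^j · j!) · det[a_c^{s_b+n−1}]_{b,c=1,…,n} / (Δ_n(a²) · Δ_n(s_1,…,s_n)). -/

import Mathlib

open MeasureTheory Matrix
open scoped BigOperators

noncomputable section

instance matrixMeasurableSpace {l : Type*} [Fintype l] : MeasurableSpace (Matrix l l ℝ) :=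
  inferInstanceAs (MeasurableSpace (l → l → ℝ))

/-- The orthogonal group `O(m)` as a subtype of `m × m` real matrices. -/
abbrev OG (m : ℕ) := Matrix.orthogonalGroup (Fin m) ℝ

/-- `t ^ w` for a real `t ≥ 0` and complex `w`, with the convention `0 ^ w = 0`. -/
def cpw (t : ℝ) (w : ℂ) : ℂ := if t = 0 then 0 else Complex.exp (w * Real.log t)

/-- The `2n × 2n` real antisymmetric matrix `D(a) = diag(a₁ J, …, aₙ J)`,
`J = [[0,1],[-1,0]]`. -/
def Dmat {n : ℕ} (a : Fin n → ℝ) : Matrix (Fin (2 * n)) (Fin (2 * n)) ℝ :=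
  Matrix.of fun i j =>
    if i.val / 2 = j.val / 2 then
      a ⟨i.val / 2, by have := i.isLt; omega⟩ *
        (if i.val % 2 = 0 ∧ j.val % 2 = 1 then 1
          else if i.val % 2 = 1 ∧ j.val % 2 = 0 then -1 else 0)
    else 0

/-- Vandermonde product `Δ_m(x) = ∏_{j<k} (x_k - x_j)`. -/
def vdm {m : ℕ} {R : Type*} [CommRing R] (x : Fin m → R) : R :=
  ∏ p ∈ Finset.univ.filter (fun p : Fin m × Fin m => p.1 < p.2), (x p.2 - x p.1)

/-- `s_{n+1} := -n-1` convention: the `j`-th exponent `(s_j - s_{j+1})/2 - 1`. -/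
def expo (n : ℕ) (s : Fin n → ℂ) (j : Fin n) : ℂ :=
  (s j - (if h : j.val + 1 < n then s ⟨j.val + 1, h⟩ else -(n : ℂ) - 1)) / 2 - 1

/-- The spherical-type group integral
`f_n(s,X) = ∫_{O(2n)} ∏_j det((kXkᵀ)_{[2j]})^{(s_j-s_{j+1})/2-1} d*k`. -/
def sphInt (n : ℕ) (μ : Measure (OG (2 * n))) (s : Fin n → ℂ)
    (X : Matrix (Fin (2 * n)) (Fin (2 * n)) ℝ) : ℂ :=
  ∫ k : OG (2 * n), ∏ j : Fin n,
    cpw ((((k : Matrix (Fin (2 * n)) (Fin (2 * n)) ℝ) * X *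
        (k : Matrix (Fin (2 * n)) (Fin (2 * n)) ℝ)ᵀ).submatrix
          (Fin.castLE (by have := j.isLt; omega : 2 * (j.val + 1) ≤ 2 * n))
          (Fin.castLE (by have := j.isLt; omega : 2 * (j.val + 1) ≤ 2 * n))).det)
      (expo n s j) ∂μ

/-!
The last row of a Haar distributed orthogonal matrix `k` is uniform on the sphere, so its squared
weights on the eigenplanes of a skew-symmetric `X` are Dirichlet distributed. These weights are the
residues of the rational function whose zeros are the squared eigenvalues of `kXkᵀ` with its last
row and column removed. A change of variables from residues to zeros shows that those zeros follow
the Dixon–Anderson density on the box interlaced with the squared eigenvalues of `X`. Integrating an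
alternant `det[β_i ^ τ_b]` against that density over the box again gives such an alternant. Going
from `O(2n)` to `O(2n - 1)` to `O(2n - 2)` therefore evaluates the integral recursively as a
constant times the quotient of an alternant by a Vandermonde determinant. The normalisation is the
confluent limit of that quotient at `(1, …, 1)`.
-/

open scoped ENNReal NNReal Topology
open ProbabilityTheory Filter

section OrthogonalGroup

variable {m : ℕ}

instance matrixBorelSpace : BorelSpace (Matrix (Fin m) (Fin m) ℝ) :=
  inferInstanceAs (BorelSpace (Fin m → Fin m → ℝ))

instance matrixSecondCountableTopology : SecondCountableTopology (Matrix (Fin m) (Fin m) ℝ) :=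
  inferInstanceAs (SecondCountableTopology (Fin m → Fin m → ℝ))

instance orthogonalGroup_secondCountableTopology : SecondCountableTopology (OG m) :=
  TopologicalSpace.Subtype.secondCountableTopology _

instance orthogonalGroup_compactSpace : CompactSpace (OG m) := by
  have hclosed : IsClosed (OG m : Set (Matrix (Fin m) (Fin m) ℝ)) := by
    have : (OG m : Set (Matrix (Fin m) (Fin m) ℝ)) = {A | A * Aᵀ = 1} :=
      Set.ext fun A => mem_orthogonalGroup_iff _ _
    rw [this]
    exact isClosed_eq (by fun_prop) continuous_const
  have hbox : IsCompact (Set.univ.pi fun _ : Fin m => Set.univ.pi fun _ : Fin m =>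
      Set.Icc (-1 : ℝ) 1) :=
    isCompact_univ_pi fun _ => isCompact_univ_pi fun _ => isCompact_Icc
  refine isCompact_iff_compactSpace.1 (hbox.of_isClosed_subset hclosed fun A hA i _ j _ => ?_)
  exact abs_le.1 (entry_norm_bound_of_unitary hA i j)

lemma exists_isMulLeftInvariant_isProbabilityMeasure (m : ℕ) :
    ∃ ν : Measure (OG m), ν.IsMulLeftInvariant ∧ IsProbabilityMeasure ν :=
  ⟨Measure.haarMeasure ⊤, inferInstance,
    ⟨by simpa using Measure.haarMeasure_self (G := OG m) (K₀ := ⊤)⟩⟩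

lemma orthogonalGroup_mul_transpose (k : OG m) : k.1 * k.1ᵀ = 1 :=
  (mem_orthogonalGroup_iff _ _).1 k.2

lemma orthogonalGroup_transpose_mul (k : OG m) : k.1ᵀ * k.1 = 1 :=
  (mem_orthogonalGroup_iff' _ _).1 k.2

lemma continuous_orthogonalGroup_conj (X : Matrix (Fin m) (Fin m) ℝ) :
    Continuous fun k : OG m => k.1 * X * k.1ᵀ := by
  fun_prop

/-- The leading principal submatrix of corank one. -/
def truncate (A : Matrix (Fin (m + 1)) (Fin (m + 1)) ℝ) : Matrix (Fin m) (Fin m) ℝ :=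
  A.submatrix Fin.castSucc Fin.castSucc

/-- The block-diagonal matrix `diag(h, 1)`. -/
def blockExtension (h : Matrix (Fin m) (Fin m) ℝ) : Matrix (Fin (m + 1)) (Fin (m + 1)) ℝ :=
  (fromBlocks h 0 0 (1 : Matrix (Fin 1) (Fin 1) ℝ)).submatrix
    finSumFinEquiv.symm finSumFinEquiv.symm

lemma blockExtension_castSucc (h : Matrix (Fin m) (Fin m) ℝ) (i : Fin m) (j : Fin (m + 1)) :
    blockExtension h i.castSucc j = Fin.snoc (α := fun _ => ℝ) (h i) 0 j := by
  induction j using Fin.lastCases with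
  | last => simp [blockExtension, Fin.castSucc]
  | cast j => simp only [Fin.snoc_castSucc]; simp [blockExtension, Fin.castSucc]

lemma truncate_conj_blockExtension (h : Matrix (Fin m) (Fin m) ℝ)
    (A : Matrix (Fin (m + 1)) (Fin (m + 1)) ℝ) :
    truncate (blockExtension h * A * (blockExtension h)ᵀ) = h * truncate A * hᵀ := by
  ext i j
  simp [truncate, mul_apply, Fin.sum_univ_castSucc, blockExtension_castSucc]

/-- The inclusion `O(m) → O(m + 1)`, `h ↦ diag(h, 1)`. -/
def orthogonalExtension (h : OG m) : OG (m + 1) :=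
  ⟨blockExtension h.1, by
    rw [mem_orthogonalGroup_iff, blockExtension, transpose_submatrix, submatrix_mul_equiv,
      fromBlocks_transpose, fromBlocks_multiply]
    simp [orthogonalGroup_mul_transpose]⟩

lemma continuous_orthogonalExtension : Continuous (orthogonalExtension (m := m)) := by
  unfold orthogonalExtension blockExtension
  fun_prop

end OrthogonalGroup

section MinorPower

lemma cpw_eq_abs_cpow {w : ℂ} (hw : w ≠ 0) (t : ℝ) : cpw t w = (|t| : ℝ) ^ w := by
  rcases eq_or_ne t 0 with rfl | ht
  · simp [cpw, hw]
  · rw [cpw, if_neg ht, Complex.cpow_def_of_ne_zero (by simpa using ht),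
      ← Complex.ofReal_log (abs_nonneg t), Real.log_abs, mul_comm]

lemma norm_cpw_of_ne_zero {t : ℝ} (ht : t ≠ 0) (w : ℂ) : ‖cpw t w‖ = |t| ^ w.re := by
  simp [cpw, ht, Complex.norm_exp, Real.rpow_def_of_pos (abs_pos.2 ht), mul_comm]

lemma norm_cpw_le (t : ℝ) {w : ℂ} {c : ℝ} (hw : 0 ≤ w.re) (hc : w.re ≤ c) :
    ‖cpw t w‖ ≤ (1 + |t|) ^ c := by
  rcases eq_or_ne t 0 with rfl | ht
  · simp [cpw]
  · rw [norm_cpw_of_ne_zero ht]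
    calc |t| ^ w.re ≤ (1 + |t|) ^ w.re := by gcongr; linarith
      _ ≤ (1 + |t|) ^ c := by gcongr; linarith [abs_nonneg t]

lemma continuous_cpw {w : ℂ} (hw : 0 < w.re) : Continuous fun t => cpw t w := by
  have h0 : w ≠ 0 := by rintro rfl; simp at hw
  simp_rw [cpw_eq_abs_cpow h0]
  exact (Complex.continuous_ofReal_cpow_const hw).comp continuous_abs

lemma measurable_cpw (w : ℂ) : Measurable fun t => cpw t w := by
  unfold cpw
  exact Measurable.ite (measurableSet_singleton 0) measurable_const (by fun_prop)

variable {m n : ℕ}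

/-- The integrand of `sphInt` for a general exponent vector: the product over `j < n` of the
leading principal minors of sizes `2(j + 1)`, raised to the powers `e j`. Exponents are indexed by
`ℕ`, so that passing to `n - 1` factors does not change the exponent vector. -/
def minorPower (hn : 2 * n ≤ m) (e : ℕ → ℂ) (A : Matrix (Fin m) (Fin m) ℝ) : ℂ :=
  ∏ j : Fin n, cpw (A.submatrix
    (Fin.castLE (by have := j.isLt; omega : 2 * (j.val + 1) ≤ m))
    (Fin.castLE (by have := j.isLt; omega : 2 * (j.val + 1) ≤ m))).det (e j)

/-- The mean of `minorPower` over the conjugates `kXkᵀ` of a matrix. -/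
def minorPowerMean (hn : 2 * n ≤ m) (e : ℕ → ℂ) (μ : Measure (OG m))
    (X : Matrix (Fin m) (Fin m) ℝ) : ℂ :=
  ∫ k : OG m, minorPower hn e (k.1 * X * k.1ᵀ) ∂μ

lemma minorPower_truncate (hn : 2 * n ≤ m) (e : ℕ → ℂ)
    (A : Matrix (Fin (m + 1)) (Fin (m + 1)) ℝ) :
    minorPower hn e (truncate A) = minorPower (by omega : 2 * n ≤ m + 1) e A := rfl

lemma measurable_minorPower (hn : 2 * n ≤ m) (e : ℕ → ℂ) : Measurable (minorPower hn e) := by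
  refine Finset.measurable_fun_prod _ fun j _ => (measurable_cpw (e j)).comp ?_
  exact Continuous.measurable (by fun_prop)

lemma continuous_minorPower (hn : 2 * n ≤ m) {e : ℕ → ℂ} (he : ∀ j < n, 0 < (e j).re) :
    Continuous (minorPower hn e) :=
  continuous_finsetProd _ fun j _ => (continuous_cpw (he j j.2)).comp (by fun_prop)

lemma exists_continuous_norm_minorPower_le (hn : 2 * n ≤ m) (c : ℕ → ℝ) :
    ∃ B : Matrix (Fin m) (Fin m) ℝ → ℝ, Continuous B ∧
      ∀ e : ℕ → ℂ, (∀ j < n, 0 ≤ (e j).re ∧ (e j).re ≤ c j) →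
        ∀ A, ‖minorPower hn e A‖ ≤ B A := by
  refine ⟨fun A => ∏ j : Fin n, (1 + |(A.submatrix
    (Fin.castLE (by have := j.isLt; omega : 2 * (j.val + 1) ≤ m))
    (Fin.castLE (by have := j.isLt; omega : 2 * (j.val + 1) ≤ m))).det|) ^ c j,
    ?_, fun e he A => ?_⟩
  · refine continuous_finsetProd _ fun j _ => Continuous.rpow_const (by fun_prop) fun A => Or.inl ?_
    positivity
  · rw [minorPower, norm_prod]
    exact Finset.prod_le_prod (fun _ _ => norm_nonneg _)
      fun j _ => norm_cpw_le _ (he j j.2).1 (he j j.2).2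

lemma integrable_minorPower_comp {α : Type*} [TopologicalSpace α] [CompactSpace α]
    [MeasurableSpace α] [OpensMeasurableSpace α] {ν : Measure α} [IsFiniteMeasure ν]
    (hn : 2 * n ≤ m) {e : ℕ → ℂ} (he : ∀ j < n, 0 ≤ (e j).re)
    {f : α → Matrix (Fin m) (Fin m) ℝ} (hf : Continuous f) :
    Integrable (fun x => minorPower hn e (f x)) ν := by
  obtain ⟨B, hB, hle⟩ := exists_continuous_norm_minorPower_le hn fun j => (e j).re
  have hBf : Integrable (fun x => B (f x)) ν :=
    (hB.comp hf).integrable_of_hasCompactSupport (HasCompactSupport.of_compactSpace _)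
  exact hBf.mono' ((measurable_minorPower hn e).comp hf.measurable).aestronglyMeasurable
    (.of_forall fun x => hle e (fun j hj => ⟨he j hj, le_rfl⟩) (f x))

lemma minorPowerMean_succ (hn : 2 * n ≤ m) {e : ℕ → ℂ} (he : ∀ j < n, 0 ≤ (e j).re)
    (μ : Measure (OG (m + 1))) [μ.IsMulLeftInvariant] [IsProbabilityMeasure μ]
    (ν : Measure (OG m)) [IsProbabilityMeasure ν] (X : Matrix (Fin (m + 1)) (Fin (m + 1)) ℝ) :
    minorPowerMean (by omega : 2 * n ≤ m + 1) e μ X =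
      ∫ k : OG (m + 1), minorPowerMean hn e ν (truncate (k.1 * X * k.1ᵀ)) ∂μ := by
  set φ : OG (m + 1) → ℂ := fun k => minorPower (by omega : 2 * n ≤ m + 1) e (k.1 * X * k.1ᵀ)
  have hint : Integrable (fun p : OG m × OG (m + 1) => φ (orthogonalExtension p.1 * p.2))
      (ν.prod μ) :=
    integrable_minorPower_comp _ he ((continuous_orthogonalGroup_conj X).comp
      ((continuous_orthogonalExtension.comp continuous_fst).mul continuous_snd))
  calc ∫ k, φ k ∂μ = ∫ h : OG m, ∫ k, φ (orthogonalExtension h * k) ∂μ ∂ν := by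
        simp [integral_mul_left_eq_self]
    _ = ∫ k, ∫ h : OG m, φ (orthogonalExtension h * k) ∂ν ∂μ := integral_integral_swap hint
    _ = ∫ k, minorPowerMean hn e ν (truncate (k.1 * X * k.1ᵀ)) ∂μ := by
        refine integral_congr_ae (.of_forall fun k => integral_congr_ae (.of_forall fun h => ?_))
        simp only
        rw [← truncate_conj_blockExtension, minorPower_truncate]
        simp [φ, orthogonalExtension, Matrix.mul_assoc]

end MinorPower
section Sphere

variable {m : ℕ}

/-- The orthogonal group as the group of linear isometries of Euclidean space. -/
def orthogonalGroupEquivIsometry (m : ℕ) :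
    OG m ≃* (EuclideanSpace ℝ (Fin m) ≃ₗᵢ[ℝ] EuclideanSpace ℝ (Fin m)) :=
  (Unitary.mapEquiv { (toEuclideanCLM (n := Fin m) (𝕜 := ℝ) : _ ≃* _) with
    map_star' := map_star toEuclideanCLM }).toMulEquiv.trans Unitary.linearIsometryEquiv

lemma ofLp_orthogonalGroupEquivIsometry (k : OG m) (x : EuclideanSpace ℝ (Fin m)) :
    (orthogonalGroupEquivIsometry m k x).ofLp = k.1 *ᵥ x.ofLp := rfl

lemma exists_orthogonalGroup_mulVec_eq {x y : Fin m → ℝ} (h : x ⬝ᵥ x = y ⬝ᵥ y) :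
    ∃ k : OG m, k.1 *ᵥ x = y := by
  have hnorm : ‖WithLp.toLp 2 x‖ = ‖WithLp.toLp 2 y‖ := by
    simp only [dotProduct, ← pow_two] at h
    simp [EuclideanSpace.norm_eq, h]
  refine ⟨(orthogonalGroupEquivIsometry m).symm
    (Submodule.reflection (ℝ ∙ (WithLp.toLp 2 x - WithLp.toLp 2 y))ᗮ), ?_⟩
  rw [← WithLp.ofLp_toLp 2 x, ← ofLp_orthogonalGroupEquivIsometry, MulEquiv.apply_symm_apply,
    WithLp.ofLp_toLp, Submodule.reflection_sub hnorm]

lemma map_mulVec_pi_gaussianReal (k : OG m) :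
    (Measure.pi fun _ : Fin m => gaussianReal 0 1).map (k.1 *ᵥ ·) =
      Measure.pi fun _ => gaussianReal 0 1 := by
  have hmeas : Measurable (k.1 *ᵥ ·) :=
    Continuous.measurable (by fun_prop : Continuous fun x : Fin m → ℝ => k.1 *ᵥ x)
  have hpi : (Measure.pi fun _ : Fin m => gaussianReal 0 1) =
      (stdGaussian (EuclideanSpace ℝ (Fin m))).map WithLp.ofLp := by
    rw [← map_pi_eq_stdGaussian, Measure.map_map (by fun_prop) (by fun_prop)]
    exact Measure.map_id.symm
  conv_rhs => rw [hpi, ← stdGaussian_map (orthogonalGroupEquivIsometry m k)]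
  rw [hpi, Measure.map_map hmeas (by fun_prop), Measure.map_map (by fun_prop) (by fun_prop)]
  rfl

lemma lintegral_transpose_mulVec_smul_eq {μ : Measure (OG m)} [μ.IsMulLeftInvariant]
    {F : (Fin m → ℝ) → ℝ≥0∞} (hF : ∀ c : ℝ, 0 < c → ∀ x, F (c • x) = F x)
    {e x : Fin m → ℝ} (he : e ⬝ᵥ e = 1) (hx : x ≠ 0) :
    ∫⁻ k, F (k.1ᵀ *ᵥ x) ∂μ = ∫⁻ k, F (k.1ᵀ *ᵥ e) ∂μ := by
  have hxx : 0 < x ⬝ᵥ x := (Finset.sum_nonneg fun i _ => mul_self_nonneg (x i)).lt_of_ne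
    fun h => hx (dotProduct_self_eq_zero.1 h.symm)
  set r := √(x ⬝ᵥ x)
  have hr : 0 < r := Real.sqrt_pos.2 hxx
  obtain ⟨k₀, hk₀⟩ : ∃ k : OG m, k.1 *ᵥ (r • e) = x := by
    refine exists_orthogonalGroup_mulVec_eq ?_
    simp [smul_dotProduct, dotProduct_smul, he, r, Real.mul_self_sqrt hxx.le]
  calc ∫⁻ k, F (k.1ᵀ *ᵥ x) ∂μ = ∫⁻ k, F ((k₀ * k).1ᵀ *ᵥ x) ∂μ :=
        (lintegral_mul_left_eq_self (fun k : OG m => F (k.1ᵀ *ᵥ x)) k₀).symm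
    _ = ∫⁻ k, F (k.1ᵀ *ᵥ e) ∂μ := by
        refine lintegral_congr fun k => ?_
        rw [← hF r hr (k.1ᵀ *ᵥ e), ← mulVec_smul, ← hk₀, mulVec_mulVec, Submonoid.coe_mul,
          transpose_mul, Matrix.mul_assoc, orthogonalGroup_transpose_mul, Matrix.mul_one]

/-- Averaging the rotation-invariant Gaussian over the rotations shows that the direction of a
Gaussian vector is distributed like any row of a Haar random orthogonal matrix. -/
lemma map_transpose_mulVec_eq_map_pi_gaussianReal (μ : Measure (OG (m + 1)))
    [μ.IsMulLeftInvariant] [IsProbabilityMeasure μ] {e : Fin (m + 1) → ℝ} (he : e ⬝ᵥ e = 1)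
    {Y : Type*} [MeasurableSpace Y] {ρ : (Fin (m + 1) → ℝ) → Y} (hρ : Measurable ρ)
    (hsmul : ∀ c : ℝ, 0 < c → ∀ x, ρ (c • x) = ρ x) :
    μ.map (fun k => ρ (k.1ᵀ *ᵥ e)) = (Measure.pi fun _ => gaussianReal 0 1).map ρ := by
  set γ : Measure (Fin (m + 1) → ℝ) := Measure.pi fun _ => gaussianReal 0 1
  have hcont : Continuous fun p : OG (m + 1) × (Fin (m + 1) → ℝ) => p.1.1ᵀ *ᵥ p.2 := by fun_prop
  have hρe : Measurable fun k : OG (m + 1) => ρ (k.1ᵀ *ᵥ e) :=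
    hρ.comp (hcont.comp (.prodMk_left e)).measurable
  have hne : ∀ᵐ x ∂γ, x ≠ 0 := by
    have := nullSingletonClass_gaussianReal (μ := 0) (v := 1) one_ne_zero
    simp [ae_iff, γ]
  ext B hB
  set F : (Fin (m + 1) → ℝ) → ℝ≥0∞ := fun x => B.indicator 1 (ρ x)
  have hF : Measurable F := (measurable_one.indicator hB).comp hρ
  have hFsmul (c : ℝ) (hc : 0 < c) (x) : F (c • x) = F x := by
    simp only [F, hsmul c hc]
  rw [Measure.map_apply hρe hB, Measure.map_apply hρ hB]
  calc μ ((fun k => ρ (k.1ᵀ *ᵥ e)) ⁻¹' B) = ∫⁻ k, F (k.1ᵀ *ᵥ e) ∂μ :=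
        (lintegral_indicator_one (hρe hB)).symm
    _ = ∫⁻ x, ∫⁻ k, F (k.1ᵀ *ᵥ x) ∂μ ∂γ := by
        rw [lintegral_congr_ae (hne.mono fun x hx =>
          lintegral_transpose_mulVec_smul_eq hFsmul he hx)]
        simp
    _ = ∫⁻ k, ∫⁻ x, F (k.1ᵀ *ᵥ x) ∂γ ∂μ :=
        lintegral_lintegral_swap ((hF.comp hcont.measurable).comp measurable_swap).aemeasurable
    _ = ∫⁻ _ : OG (m + 1), ∫⁻ x, F x ∂γ ∂μ := by
        refine lintegral_congr fun k => ?_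
        conv_rhs => rw [show γ = _ from (map_mulVec_pi_gaussianReal k⁻¹).symm]
        exact (lintegral_map hF (hcont.comp (.prodMk_right k)).measurable).symm
    _ = γ (ρ ⁻¹' B) := by
        rw [lintegral_const, measure_univ, mul_one]
        exact lintegral_indicator_one (hρ hB)

end Sphere

section GammaLaws

lemma map_eq_of_mgf_eq {Ω Ω' : Type*} [MeasurableSpace Ω] [MeasurableSpace Ω'] {μ : Measure Ω}
    {μ' : Measure Ω'} [IsProbabilityMeasure μ] [IsProbabilityMeasure μ'] {X : Ω → ℝ} {Y : Ω' → ℝ}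
    (hX : AEMeasurable X μ) (hY : AEMeasurable Y μ') (h : mgf X μ = mgf Y μ')
    (h0 : 0 ∈ interior (integrableExpSet X μ)) : μ.map X = μ'.map Y := by
  have := Measure.isProbabilityMeasure_map hX
  have := Measure.isProbabilityMeasure_map hY
  refine Measure.ext_of_charFun (funext fun t => ?_)
  rw [← complexMGF_mul_I hX, ← complexMGF_mul_I hY]
  exact eqOn_complexMGF_of_mgf h (by simpa using h0)

-- Beyond `r` the defining integral diverges, so the `mgf` takes its junk value `0`.
lemma mgf_id_gammaMeasure {a r : ℝ} (ha : 0 < a) (hr : 0 < r) (t : ℝ) :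
    mgf id (gammaMeasure a r) t = if t < r then (r / (r - t)) ^ a else 0 := by
  have hpdf (x : ℝ) : gammaPDFReal a r x • Real.exp (t * x) = (Set.Ici 0).indicator
      (fun x : ℝ => r ^ a / Real.Gamma a * (x ^ (a - 1) * Real.exp (-((r - t) * x)))) x := by
    by_cases hx : 0 ≤ x
    · rw [Set.indicator_of_mem (Set.mem_Ici.2 hx), gammaPDFReal, if_pos hx, smul_eq_mul, mul_assoc,
        ← Real.exp_add, mul_assoc]
      ring_nf
    · rw [Set.indicator_of_notMem (by simpa using hx), gammaPDFReal, if_neg hx, zero_smul]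
  simp only [mgf, gammaMeasure, id]
  rw [integral_withDensity_eq_integral_toReal_smul
    (f := gammaPDF a r) (measurable_gammaPDFReal a r).ennreal_ofReal
    (ae_of_all _ fun _ => ENNReal.ofReal_lt_top)]
  simp_rw [gammaPDF, ENNReal.toReal_ofReal (gammaPDFReal_nonneg ha hr _), hpdf]
  rw [integral_indicator measurableSet_Ici, integral_Ici_eq_integral_Ioi, integral_const_mul]
  split_ifs with ht
  · have hrt : 0 < r - t := sub_pos.2 ht
    rw [Real.integral_rpow_mul_exp_neg_mul_Ioi ha hrt, div_eq_mul_one_div r (r - t),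
      Real.mul_rpow hr.le (by positivity)]
    have := (Real.Gamma_pos_of_pos ha).ne'
    field_simp
  · refine mul_eq_zero_of_right _ (integral_undef fun hint => ?_)
    refine not_integrableOn_Ioi_rpow (a - 1) (hint.mono' (by fun_prop) ?_)
    filter_upwards [ae_restrict_mem measurableSet_Ioi] with x hx
    have hx : 0 < x := hx
    have : 0 ≤ (t - r) * x := mul_nonneg (by linarith) hx.le
    rw [Real.norm_of_nonneg (by positivity)]
    exact le_mul_of_one_le_right (by positivity) (Real.one_le_exp (by linarith))

lemma mgf_sq_gaussianReal (t : ℝ) :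
    mgf (fun x => x ^ 2) (gaussianReal 0 1) t =
      if t < 1 / 2 then ((1 / 2) / (1 / 2 - t)) ^ (1 / 2 : ℝ) else 0 := by
  have hpdf (x : ℝ) : gaussianPDFReal 0 1 x • Real.exp (t * x ^ 2) =
      (√(2 * Real.pi))⁻¹ * Real.exp (-(1 / 2 - t) * x ^ 2) := by
    rw [gaussianPDFReal, smul_eq_mul, NNReal.coe_one, mul_one, mul_assoc, ← Real.exp_add]
    ring_nf
  rw [mgf, integral_gaussianReal_eq_integral_smul one_ne_zero]
  simp_rw [hpdf]
  rw [integral_const_mul, integral_gaussian, ← Real.sqrt_inv, ← Real.sqrt_mul (by positivity)]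
  split_ifs with ht
  · rw [← Real.sqrt_eq_rpow]
    congr 1
    have : 1 / 2 - t ≠ 0 := by linarith
    field_simp
  · refine Real.sqrt_eq_zero_of_nonpos (mul_nonpos_of_nonneg_of_nonpos (by positivity) ?_)
    exact div_nonpos_of_nonneg_of_nonpos Real.pi_pos.le (by linarith)

lemma map_sum_sq_pi_gaussianReal (ι : Type*) [Fintype ι] [Nonempty ι] :
    (Measure.pi fun _ : ι => gaussianReal 0 1).map (fun x => ∑ i, x i ^ 2) =
      gammaMeasure (Fintype.card ι / 2) (1 / 2) := by
  have hcard : (0 : ℝ) < Fintype.card ι := by exact_mod_cast Fintype.card_pos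
  have := isProbabilityMeasure_gammaMeasure (half_pos hcard) (r := 1 / 2) (by norm_num)
  have hmgf : mgf id (gammaMeasure (Fintype.card ι / 2) (1 / 2)) =
      mgf (fun x => ∑ i, x i ^ 2) (Measure.pi fun _ : ι => gaussianReal 0 1) := by
    ext t
    have hprod : mgf (fun x => ∑ i, x i ^ 2) (Measure.pi fun _ : ι => gaussianReal 0 1) t =
        mgf (fun x => x ^ 2) (gaussianReal 0 1) t ^ Fintype.card ι := by
      simp_rw [mgf, Finset.mul_sum, Real.exp_sum]
      rw [integral_fintype_prod_eq_prod fun _ x => Real.exp (t * x ^ 2), Finset.prod_const,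
        Finset.card_univ]
    rw [hprod, mgf_id_gammaMeasure (half_pos hcard) (by norm_num), mgf_sq_gaussianReal]
    split_ifs with ht
    · rw [← Real.rpow_mul_natCast (div_nonneg (by norm_num) (by linarith))]
      congr 1
      ring
    · rw [zero_pow Fintype.card_ne_zero]
  have hint : Set.Iio (1 / 2) ⊆
      integrableExpSet id (gammaMeasure (Fintype.card ι / 2) (1 / 2)) := by
    intro t ht
    have ht : t < 1 / 2 := ht
    refine mgf_pos_iff.1 ?_
    rw [mgf_id_gammaMeasure (half_pos hcard) (by norm_num), if_pos ht]
    exact Real.rpow_pos_of_pos (div_pos (by norm_num) (sub_pos.2 ht)) _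
  have hmeas : Measurable fun x : ι → ℝ => ∑ i, x i ^ 2 := by fun_prop
  rw [← map_eq_of_mgf_eq aemeasurable_id hmeas.aemeasurable hmgf
    (interior_maximal hint isOpen_Iio (by norm_num)), Measure.map_id]

/-- The squared norms of the blocks of coordinates of `x` given by the fibres of `l`. -/
def blockNormSq {ι κ : Type*} [Fintype ι] [DecidableEq κ] (l : ι → κ) (x : ι → ℝ) (j : κ) : ℝ :=
  ∑ i with l i = j, x i ^ 2

lemma blockNormSq_smul {ι κ : Type*} [Fintype ι] [DecidableEq κ] (l : ι → κ) (c : ℝ)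
    (x : ι → ℝ) : blockNormSq l (c • x) = c ^ 2 • blockNormSq l x := by
  ext j
  simp [blockNormSq, Finset.mul_sum, mul_pow]

lemma continuous_blockNormSq {ι κ : Type*} [Fintype ι] [DecidableEq κ] (l : ι → κ) :
    Continuous (blockNormSq l) := by
  unfold blockNormSq
  fun_prop

lemma map_blockNormSq_pi_gaussianReal {ι κ : Type*} [Fintype ι] [Fintype κ] [DecidableEq κ]
    {l : ι → κ} (hl : l.Surjective) :
    (Measure.pi fun _ : ι => gaussianReal 0 1).map (blockNormSq l) =
      Measure.pi fun j => gammaMeasure (Fintype.card {i // l i = j} / 2) (1 / 2) := by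
  have hne (j : κ) : Nonempty {i // l i = j} := nonempty_subtype.2 (hl j)
  have hmeas : Measurable (blockNormSq l) := (continuous_blockNormSq l).measurable
  have := Measure.isProbabilityMeasure_map
    (μ := Measure.pi fun _ : ι => gaussianReal 0 1) hmeas.aemeasurable
  have hmeas_fiber (j : κ) : Measurable fun x : {i // l i = j} → ℝ => ∑ i, x i ^ 2 := by fun_prop
  have (j : κ) := Measure.isProbabilityMeasure_map
    (μ := Measure.pi fun _ : {i // l i = j} => gaussianReal 0 1) (hmeas_fiber j).aemeasurable
  simp_rw [← fun j => map_sum_sq_pi_gaussianReal {i // l i = j}]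
  refine charFun_eq_pi_iff.1 fun t => ?_
  have hfactor (j : κ) : charFun ((Measure.pi fun _ : {i // l i = j} => gaussianReal 0 1).map
      fun x => ∑ i, x i ^ 2) (t j) = ∏ _i : {i // l i = j},
        ∫ x, Complex.exp (t j * x ^ 2 * Complex.I) ∂gaussianReal 0 1 := by
    rw [charFun_apply_real, integral_map (hmeas_fiber j).aemeasurable (by fun_prop),
      ← integral_fintype_prod_eq_prod fun _ (x : ℝ) => Complex.exp (t j * x ^ 2 * Complex.I)]
    simp_rw [← Complex.exp_sum, Complex.ofReal_sum, Finset.mul_sum, Finset.sum_mul,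
      Complex.ofReal_pow]
  have hexp (x : ι → ℝ) : Complex.exp (inner ℝ (WithLp.toLp 2 (blockNormSq l x)) t *
      Complex.I) = ∏ i, Complex.exp (t (l i) * x i ^ 2 * Complex.I) := by
    rw [← Complex.exp_sum, ← Finset.sum_mul, ← Finset.sum_fiberwise _ l]
    congr 2
    simp only [blockNormSq, PiLp.inner_apply, RCLike.inner_apply, conj_trivial]
    push_cast [Finset.mul_sum]
    refine Finset.sum_congr rfl fun j _ => Finset.sum_congr rfl fun i hi => ?_
    rw [(Finset.mem_filter.1 hi).2]
  rw [charFun_apply, integral_map (by fun_prop) (by fun_prop),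
    integral_map hmeas.aemeasurable (by fun_prop)]
  simp_rw [hexp, hfactor]
  rw [integral_fintype_prod_eq_prod fun i (x : ℝ) => Complex.exp (t (l i) * x ^ 2 * Complex.I),
    ← Finset.prod_fiberwise _ l]
  refine Finset.prod_congr rfl fun j _ => ?_
  rw [Finset.prod_subtype (p := fun i => l i = j) _ (by simp)]
  exact Finset.prod_congr rfl fun i _ => by rw [i.2]

lemma lintegral_pi_prod_eq_prod_lintegral {n : ℕ} {α : Type*} [MeasurableSpace α]
    {μ : Fin n → Measure α} [∀ i, SigmaFinite (μ i)] {f : Fin n → α → ℝ≥0∞}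
    (hf : ∀ i, Measurable (f i)) :
    ∫⁻ x, ∏ i, f i (x i) ∂Measure.pi μ = ∏ i, ∫⁻ x, f i x ∂μ i := by
  induction n with
  | zero => simp
  | succ n ih =>
    rw [← ((measurePreserving_piFinSuccAbove μ 0).symm).lintegral_comp_emb
      (MeasurableEquiv.measurableEmbedding _)]
    simp_rw [Fin.prod_univ_succ, MeasurableEquiv.piFinSuccAbove_symm_apply, Fin.insertNthEquiv,
      Fin.insertNth_zero, Equiv.coe_fn_mk, Fin.cons_succ, Fin.cons_zero]
    rw [← ih fun i : Fin n => hf i.succ]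
    have hmeas : Measurable fun x : Fin n → α => ∏ i, f i.succ (x i) := by fun_prop
    exact lintegral_prod_mul (hf 0).aemeasurable hmeas.aemeasurable

lemma pi_withDensity {n : ℕ} {α : Type*} [MeasurableSpace α]
    {μ : Fin n → Measure α} [∀ i, SigmaFinite (μ i)] {f : Fin n → α → ℝ≥0∞}
    (hf : ∀ i, Measurable (f i)) [∀ i, SigmaFinite ((μ i).withDensity (f i))] :
    Measure.pi (fun i => (μ i).withDensity (f i)) =
      (Measure.pi μ).withDensity fun x => ∏ i, f i (x i) := by
  refine Measure.pi_eq fun s hs => ?_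
  have hind (x : Fin n → α) : (Set.univ.pi s).indicator (fun x => ∏ i, f i (x i)) x =
      ∏ i, (s i).indicator (f i) (x i) := by
    by_cases hx : x ∈ Set.univ.pi s
    · rw [Set.indicator_of_mem hx]
      exact Finset.prod_congr rfl fun i _ => (Set.indicator_of_mem (hx i trivial) _).symm
    · rw [Set.indicator_of_notMem hx]
      obtain ⟨i, hi⟩ : ∃ i, x i ∉ s i := by simpa using hx
      exact (Finset.prod_eq_zero (Finset.mem_univ i) (Set.indicator_of_notMem hi _)).symm
  rw [withDensity_apply _ (MeasurableSet.univ_pi hs),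
    ← lintegral_indicator (MeasurableSet.univ_pi hs)]
  simp_rw [hind]
  rw [lintegral_pi_prod_eq_prod_lintegral fun i => (hf i).indicator (hs i)]
  exact Finset.prod_congr rfl fun i _ => by
    rw [withDensity_apply _ (hs i), lintegral_indicator (hs i)]

end GammaLaws

section PartialFractions

open Polynomial Lagrange

variable {d : ℕ} {α : Fin (d + 1) → ℝ}

/-- The residues at the points `α j` of the rational function
`z₀ ∏ᵢ (X - z_{i+1}) / ∏ⱼ (X - α j)`; the leading coefficient and the zeros are packed in a single
vector `z` so that `residues α` is a map from `ℝ^{d+1}` to itself. -/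
def residues (α z : Fin (d + 1) → ℝ) (j : Fin (d + 1)) : ℝ :=
  nodalWeight Finset.univ α j * (z 0 * ∏ i : Fin d, (α j - z i.succ))

/-- The vectors `z` with `z₀ > 0` whose remaining entries interlace `α`:
`α₀ < z₁ < α₁ < z₂ < ⋯ < α_d`. -/
def interlacing (α : Fin (d + 1) → ℝ) : Set (Fin (d + 1) → ℝ) :=
  {z | 0 < z 0 ∧ ∀ i : Fin d, α i.castSucc < z i.succ ∧ z i.succ < α i.succ}

/-- The numerator of `∑ⱼ t j / (X - α j)` over the common denominator `∏ⱼ (X - α j)`. -/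
def residueNumerator (α t : Fin (d + 1) → ℝ) : ℝ[X] :=
  ∑ j, C (t j) * nodal (Finset.univ.erase j) α

lemma nodalWeight_univ_eq_prod_succAbove (α : Fin (d + 1) → ℝ) (j : Fin (d + 1)) :
    nodalWeight Finset.univ α j = ∏ i : Fin d, (α j - α (j.succAbove i))⁻¹ := by
  have herase : Finset.univ.erase j = Finset.univ.image j.succAbove := by
    rw [Fin.image_succAbove_univ]; ext; simp
  rw [nodalWeight, herase, Finset.prod_image fun _ _ _ _ h => Fin.succAbove_right_injective h]

lemma residues_eq_mul_prod_div (α z : Fin (d + 1) → ℝ) (j : Fin (d + 1)) :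
    residues α z j = z 0 * ∏ i : Fin d, (α j - z i.succ) / (α j - α (j.succAbove i)) := by
  rw [residues, nodalWeight_univ_eq_prod_succAbove, mul_left_comm, mul_comm (∏ i, _),
    ← Finset.prod_mul_distrib]
  simp_rw [div_eq_mul_inv]

lemma residueNumerator_eval_node (α t : Fin (d + 1) → ℝ) (j : Fin (d + 1)) :
    (residueNumerator α t).eval (α j) = t j * (nodalWeight Finset.univ α j)⁻¹ := by
  rw [residueNumerator, eval_finsetSum, Finset.sum_eq_single j, eval_C_mul,
    nodalWeight_eq_eval_nodal_erase_inv, inv_inv]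
  · intro i _ hij
    rw [eval_C_mul, eval_nodal_at_node (Finset.mem_erase.2 ⟨hij.symm, Finset.mem_univ j⟩), mul_zero]
  · simp

lemma degree_C_mul_nodal_lt {ι : Type*} {s : Finset ι} {v : ι → ℝ} (hs : s.card < d + 1) (r : ℝ) :
    (C r * nodal s v).degree < (d + 1 : ℕ) :=
  (degree_mul_le _ _).trans_lt <| (add_le_add degree_C_le le_rfl).trans_lt <| by
    rw [degree_nodal, zero_add]
    exact_mod_cast hs

lemma coeff_nodal_card {ι : Type*} (s : Finset ι) (v : ι → ℝ) : (nodal s v).coeff s.card = 1 := by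
  simpa [Monic, leadingCoeff, natDegree_nodal] using nodal_monic (s := s) (v := v)

lemma residueNumerator_degree_lt (α t : Fin (d + 1) → ℝ) :
    (residueNumerator α t).degree < (d + 1 : ℕ) := by
  refine (degree_sum_le _ _).trans_lt ?_
  rw [Finset.sup_lt_iff (WithBot.bot_lt_coe _)]
  exact fun j _ => degree_C_mul_nodal_lt (by simp) _

lemma residueNumerator_coeff (α t : Fin (d + 1) → ℝ) :
    (residueNumerator α t).coeff d = ∑ j, t j := by
  rw [residueNumerator, finsetSum_coeff]
  refine Finset.sum_congr rfl fun j _ => ?_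
  have hcoeff := coeff_nodal_card (Finset.univ.erase j) α
  rw [Finset.card_erase_of_mem (Finset.mem_univ j), Finset.card_univ, Fintype.card_fin,
    Nat.add_sub_cancel] at hcoeff
  rw [coeff_C_mul, hcoeff, mul_one]

lemma coeff_C_mul_nodal_univ (r : ℝ) (c : Fin d → ℝ) :
    (C r * nodal Finset.univ c).coeff d = r := by
  have hcoeff := coeff_nodal_card Finset.univ c
  rw [Finset.card_univ, Fintype.card_fin] at hcoeff
  rw [coeff_C_mul, hcoeff, mul_one]

lemma residueNumerator_residues (hα : Function.Injective α) (z : Fin (d + 1) → ℝ) :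
    residueNumerator α (residues α z) = C (z 0) * nodal Finset.univ fun i : Fin d => z i.succ := by
  have hdeg : (C (z 0) * nodal Finset.univ fun i : Fin d => z i.succ).degree < (d + 1 : ℕ) :=
    degree_C_mul_nodal_lt (by simp) _
  refine eq_of_degrees_lt_of_eval_index_eq (s := Finset.univ) (v := α) hα.injOn
    (by rw [Finset.card_univ, Fintype.card_fin]; exact residueNumerator_degree_lt α _)
    (by rw [Finset.card_univ, Fintype.card_fin]; exact hdeg) fun j hj => ?_
  rw [residueNumerator_eval_node, residues, eval_C_mul, eval_nodal, mul_comm,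
    inv_mul_cancel_left₀ (nodalWeight_ne_zero hα.injOn hj)]

lemma residues_eq_of_residueNumerator_eq (hα : Function.Injective α) {t z : Fin (d + 1) → ℝ}
    (h : residueNumerator α t = C (z 0) * nodal Finset.univ fun i : Fin d => z i.succ) :
    residues α z = t := by
  ext j
  have hj := congrArg (eval (α j)) h
  rw [residueNumerator_eval_node, eval_C_mul, eval_nodal] at hj
  rw [residues, ← hj, mul_comm, inv_mul_cancel_right₀
    (nodalWeight_ne_zero hα.injOn (Finset.mem_univ j))]

lemma sum_residues (hα : Function.Injective α) (z : Fin (d + 1) → ℝ) :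
    ∑ j, residues α z j = z 0 := by
  rw [← residueNumerator_coeff α, residueNumerator_residues hα, coeff_C_mul_nodal_univ]

lemma residues_pos (hα : StrictMono α) {z : Fin (d + 1) → ℝ} (hz : z ∈ interlacing α)
    (j : Fin (d + 1)) : 0 < residues α z j := by
  rw [residues_eq_mul_prod_div]
  refine mul_pos hz.1 (Finset.prod_pos fun i _ => ?_)
  have hzi := hz.2 i
  rcases lt_or_ge i.castSucc j with hij | hij
  · rw [Fin.succAbove_of_castSucc_lt _ _ hij]
    have := hα.monotone (Fin.castSucc_lt_iff_succ_le.1 hij)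
    exact div_pos (by linarith) (by have := hα hij; linarith)
  · rw [Fin.succAbove_of_le_castSucc _ _ hij]
    have := hα.monotone hij
    exact div_pos_of_neg_of_neg (by linarith) (by linarith)

lemma lt_of_mem_Ioo_castSucc_succ (hα : Monotone α) {i k : Fin d} {x y : ℝ}
    (hx : x ∈ Set.Ioo (α i.castSucc) (α i.succ)) (hy : y ∈ Set.Ioo (α k.castSucc) (α k.succ))
    (hik : i < k) : x < y :=
  hx.2.trans_le (hα (Fin.succ_le_castSucc_iff.2 hik)) |>.trans hy.1

lemma strictMono_tail_of_mem_interlacing (hα : Monotone α) {z : Fin (d + 1) → ℝ}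
    (hz : z ∈ interlacing α) : StrictMono fun i : Fin d => z i.succ :=
  fun i k hik => lt_of_mem_Ioo_castSucc_succ hα (hz.2 i) (hz.2 k) hik

lemma injOn_residues (hα : StrictMono α) : Set.InjOn (residues α) (interlacing α) := by
  intro z hz z' hz' h
  have hnum : C (z 0) * nodal Finset.univ (fun i : Fin d => z i.succ) =
      C (z' 0) * nodal Finset.univ fun i : Fin d => z' i.succ := by
    rw [← residueNumerator_residues hα.injective, h, residueNumerator_residues hα.injective]
  have h0 : z 0 = z' 0 := by rw [← sum_residues hα.injective z, h, sum_residues hα.injective]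
  refine funext (Fin.cases h0 fun i => ?_)
  have hroot := congrArg (eval (z i.succ)) hnum
  rw [eval_C_mul, eval_nodal, Finset.prod_eq_zero (Finset.mem_univ i) (sub_self _), mul_zero,
    eq_comm, eval_C_mul, eval_nodal, mul_eq_zero] at hroot
  obtain ⟨k, -, hk⟩ := Finset.prod_eq_zero_iff.1 (hroot.resolve_left hz'.1.ne')
  rw [sub_eq_zero] at hk
  rcases lt_trichotomy i k with hik | rfl | hik
  · exact absurd hk (lt_of_mem_Ioo_castSucc_succ hα.monotone (hz.2 i) (hz'.2 k) hik).ne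
  · exact hk
  · exact absurd hk (lt_of_mem_Ioo_castSucc_succ hα.monotone (hz'.2 k) (hz.2 i) hik).ne'

lemma nodalWeight_castSucc_mul_nodalWeight_succ_neg (hα : StrictMono α) (i : Fin d) :
    nodalWeight Finset.univ α i.castSucc * nodalWeight Finset.univ α i.succ < 0 := by
  have hi : α i.castSucc < α i.succ := hα Fin.castSucc_lt_succ
  simp_rw [nodalWeight_univ_eq_prod_succAbove, ← Finset.prod_mul_distrib, ← mul_inv]
  rw [← Finset.mul_prod_erase _ _ (Finset.mem_univ i)]
  refine mul_neg_of_neg_of_pos ?_ (Finset.prod_pos fun k hk => inv_pos.2 ?_)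
  · rw [Fin.succAbove_castSucc_self, Fin.succAbove_of_castSucc_lt _ _ Fin.castSucc_lt_succ]
    exact inv_lt_zero.2 (mul_neg_of_neg_of_pos (by linarith) (by linarith))
  · rcases lt_or_gt_of_ne (Finset.ne_of_mem_erase hk) with hki | hik
    · rw [Fin.succAbove_of_castSucc_lt _ _ (by simpa using hki),
        Fin.succAbove_of_castSucc_lt _ _ (Fin.castSucc_lt_succ_iff.2 hki.le)]
      have : α k.castSucc < α i.castSucc := hα (by simpa using hki)
      exact mul_pos (by linarith) (by linarith)
    · rw [Fin.succAbove_of_le_castSucc _ _ (by simpa using hik.le),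
        Fin.succAbove_of_le_castSucc _ _ (Fin.succ_le_castSucc_iff.2 hik)]
      have : α i.succ < α k.succ := hα (by simpa using hik)
      exact mul_pos_of_neg_of_neg (by linarith) (by linarith)

lemma exists_residueNumerator_eval_eq_zero (hα : StrictMono α) {t : Fin (d + 1) → ℝ}
    (ht : ∀ j, 0 < t j) (i : Fin d) :
    ∃ c ∈ Set.Ioo (α i.castSucc) (α i.succ), (residueNumerator α t).eval c = 0 := by
  set a := nodalWeight Finset.univ α i.castSucc
  set b := nodalWeight Finset.univ α i.succ
  have hab : a * b < 0 := nodalWeight_castSucc_mul_nodalWeight_succ_neg hα i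
  have hle := (hα (Fin.castSucc_lt_succ (i := i))).le
  have hcont := (residueNumerator α t).continuous.continuousOn
    (s := Set.Icc (α i.castSucc) (α i.succ))
  have hleft : _ = t i.castSucc * a⁻¹ := residueNumerator_eval_node α t i.castSucc
  have hright : _ = t i.succ * b⁻¹ := residueNumerator_eval_node α t i.succ
  rcases mul_neg_iff.1 hab with ⟨ha, hb⟩ | ⟨ha, hb⟩
  · exact intermediate_value_Ioo' hle hcont ⟨hright ▸ mul_neg_of_pos_of_neg (ht _)
      (inv_lt_zero.2 hb), hleft ▸ mul_pos (ht _) (inv_pos.2 ha)⟩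
  · exact intermediate_value_Ioo hle hcont ⟨hleft ▸ mul_neg_of_pos_of_neg (ht _)
      (inv_lt_zero.2 ha), hright ▸ mul_pos (ht _) (inv_pos.2 hb)⟩

lemma residueNumerator_eq_C_mul_nodal_of_roots {t : Fin (d + 1) → ℝ} {c : Fin d → ℝ}
    (hc : Function.Injective c) (hroot : ∀ i, (residueNumerator α t).eval (c i) = 0) :
    residueNumerator α t = C (∑ j, t j) * nodal Finset.univ c := by
  rw [← sub_eq_zero]
  refine eq_zero_of_degree_lt_of_eval_index_eq_zero (s := Finset.univ) (v := c) hc.injOn ?_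
    fun i hi => by rw [eval_sub, hroot, eval_C_mul, eval_nodal_at_node hi, mul_zero, sub_zero]
  rw [Finset.card_univ, Fintype.card_fin, degree_lt_iff_coeff_zero]
  intro m hm
  rcases hm.eq_or_lt with rfl | hlt
  · rw [coeff_sub, residueNumerator_coeff, coeff_C_mul_nodal_univ, sub_self]
  · rw [coeff_sub, (degree_lt_iff_coeff_zero _ _).1 (residueNumerator_degree_lt α t) m hlt,
      (degree_lt_iff_coeff_zero _ _).1 (degree_C_mul_nodal_lt (by simp) _) m hlt, sub_zero]

lemma residues_image_interlacing (hα : StrictMono α) :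
    residues α '' interlacing α = {t | ∀ j, 0 < t j} := by
  ext t
  refine ⟨fun ⟨z, hz, hzt⟩ => hzt ▸ residues_pos hα hz, fun ht => ?_⟩
  choose c hc hroot using exists_residueNumerator_eval_eq_zero hα ht
  have hmono : StrictMono c := fun i k hik =>
    lt_of_mem_Ioo_castSucc_succ hα.monotone (hc i) (hc k) hik
  refine ⟨Fin.cons (∑ j, t j) c, ⟨Finset.sum_pos (fun j _ => ht j) ⟨0, Finset.mem_univ _⟩, ?_⟩,
    residues_eq_of_residueNumerator_eq hα.injective ?_⟩
  · simpa using hc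
  · simpa using residueNumerator_eq_C_mul_nodal_of_roots hmono.injective hroot

end PartialFractions

section Jacobian

open Lagrange

variable {d : ℕ} {α : Fin (d + 1) → ℝ}

lemma prod_abs_inv_nodalWeight {N : ℕ} (c : Fin N → ℝ) :
    ∏ j, |(nodalWeight Finset.univ c j)⁻¹| = |(vandermonde c).det| ^ 2 := by
  have hcompl (j : Fin N) : Finset.univ.erase j = {j}ᶜ := by ext; simp
  have hinv (j : Fin N) : |(nodalWeight Finset.univ c j)⁻¹| = ∏ i ∈ {j}ᶜ, |c j - c i| := by
    rw [nodalWeight, Finset.prod_inv_distrib, inv_inv, Finset.abs_prod, hcompl]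
  simp_rw [hinv, det_vandermonde, Finset.abs_prod, sq, ← Finset.prod_mul_distrib]
  rw [← Finset.prod_prod_Ioi_mul_eq_prod_prod_off_diag fun j i : Fin N => |c i - c j|]
  exact Finset.prod_congr rfl fun i _ => Finset.prod_congr rfl fun j _ => by
    rw [abs_sub_comm (c i)]

/-- The monic polynomial with zeros `c`, followed by the ones obtained by dropping one zero: up to
factors these are the partial derivatives of `z₀ ∏ᵢ (X - z_{i+1})`. -/
def nodalFamily (c : Fin d → ℝ) (k : Fin (d + 1)) : Polynomial ℝ :=
  Fin.cases (nodal Finset.univ c) (fun k' => nodal (Finset.univ.erase k') c) k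

/-- The values of `nodalFamily c` at the points `x`. -/
def nodalFamilyMatrix (c : Fin d → ℝ) (x : Fin (d + 1) → ℝ) :
    Matrix (Fin (d + 1)) (Fin (d + 1)) ℝ :=
  of fun j k => (nodalFamily c k).eval (x j)

lemma natDegree_nodalFamily_lt (c : Fin d → ℝ) (k : Fin (d + 1)) :
    (nodalFamily c k).natDegree < d + 1 := by
  refine Fin.cases ?_ (fun k' => ?_) k <;> simp [nodalFamily, natDegree_nodal]

lemma nodalFamilyMatrix_eq_vandermonde_mul (c : Fin d → ℝ) (x : Fin (d + 1) → ℝ) :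
    nodalFamilyMatrix c x =
      vandermonde x * of fun i k : Fin (d + 1) => (nodalFamily c k).coeff i := by
  ext j k
  rw [nodalFamilyMatrix, of_apply, Polynomial.eval_eq_sum_range' (natDegree_nodalFamily_lt c k),
    Matrix.mul_apply, ← Fin.sum_univ_eq_sum_range fun i => (nodalFamily c k).coeff i * x j ^ i]
  exact Finset.sum_congr rfl fun i _ => by rw [vandermonde_apply, of_apply, mul_comm]

lemma det_nodalFamilyMatrix_cons (c : Fin d → ℝ) (x₀ : ℝ) :
    (nodalFamilyMatrix c (Fin.cons x₀ c)).det =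
      (∏ i, (x₀ - c i)) * ∏ j, (nodalWeight Finset.univ c j)⁻¹ := by
  have hcol (j : Fin d) : nodalFamilyMatrix c (Fin.cons x₀ c) j.succ 0 = 0 :=
    eval_nodal_at_node (Finset.mem_univ j)
  have hminor : (nodalFamilyMatrix c (Fin.cons x₀ c)).submatrix (Fin.succAbove 0) Fin.succ =
      diagonal fun j => (nodalWeight Finset.univ c j)⁻¹ := by
    ext j k
    rcases eq_or_ne j k with rfl | hjk
    · rw [diagonal_apply_eq, nodalWeight_eq_eval_nodal_erase_inv, inv_inv]
      rfl
    · rw [diagonal_apply_ne _ hjk]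
      exact eval_nodal_at_node (Finset.mem_erase.2 ⟨hjk, Finset.mem_univ j⟩)
  have hcorner : nodalFamilyMatrix c (Fin.cons x₀ c) 0 0 = ∏ i, (x₀ - c i) := by
    simp [nodalFamilyMatrix, nodalFamily, eval_nodal]
  rw [det_succ_column_zero, Fin.sum_univ_succ, Finset.sum_eq_zero fun j _ => by
    rw [hcol, mul_zero, zero_mul], hminor, det_diagonal, hcorner]
  simp

-- The determinant is `det (vandermonde x)` times a constant, which `x = (x₀, c)` identifies.
lemma abs_det_nodalFamilyMatrix {c : Fin d → ℝ} (hc : Function.Injective c)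
    (x : Fin (d + 1) → ℝ) :
    |(nodalFamilyMatrix c x).det| = |(vandermonde x).det| * |(vandermonde c).det| := by
  obtain ⟨x₀, hx₀⟩ := Infinite.exists_notMem_finset (Finset.univ.image c)
  have hvand : (vandermonde (Fin.cons x₀ c : Fin (d + 1) → ℝ)).det =
      (∏ i, (c i - x₀)) * (vandermonde c).det := by
    rw [det_vandermonde, Fin.prod_univ_succ, det_vandermonde]
    simp [Fin.prod_Ioi_succ]
  have hcons := congrArg abs (det_nodalFamilyMatrix_cons c x₀)
  rw [nodalFamilyMatrix_eq_vandermonde_mul, det_mul, hvand, abs_mul, abs_mul, abs_mul,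
    Finset.abs_prod, Finset.abs_prod, Finset.abs_prod, prod_abs_inv_nodalWeight,
    Finset.prod_congr rfl fun i _ => abs_sub_comm x₀ (c i), sq, mul_assoc] at hcons
  have hprod : ∏ i, |c i - x₀| ≠ 0 := Finset.prod_ne_zero_iff.2 fun i _ =>
    abs_ne_zero.2 <| sub_ne_zero.2 fun h => hx₀ (Finset.mem_image.2 ⟨i, Finset.mem_univ i, h⟩)
  have hdet : |(vandermonde c).det| ≠ 0 := abs_ne_zero.2 (det_vandermonde_ne_zero_iff.2 hc)
  rw [nodalFamilyMatrix_eq_vandermonde_mul, det_mul, abs_mul,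
    mul_left_cancel₀ hdet (mul_left_cancel₀ hprod hcons)]

/-- The Jacobian matrix of `residues α` at `z`. -/
def residuesJacobian (α z : Fin (d + 1) → ℝ) : Matrix (Fin (d + 1)) (Fin (d + 1)) ℝ :=
  of fun j k => nodalWeight Finset.univ α j *
    (nodalFamilyMatrix (fun i => z i.succ) α j k * Fin.cases 1 (fun _ => -z 0) k)

lemma abs_det_residuesJacobian (hα : StrictMono α) {z : Fin (d + 1) → ℝ}
    (hz : z ∈ interlacing α) :
    |(residuesJacobian α z).det| =
      z 0 ^ d * |(vandermonde fun i : Fin d => z i.succ).det| / |(vandermonde α).det| := by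
  have hfactor : residuesJacobian α z = diagonal (fun j => nodalWeight Finset.univ α j) *
      (nodalFamilyMatrix (fun i => z i.succ) α *
        diagonal fun k => Fin.cases 1 (fun _ => -z 0) k) := by
    ext j k
    rw [diagonal_mul, mul_diagonal]
    rfl
  have hweight : ∏ j, |nodalWeight Finset.univ α j| = (|(vandermonde α).det| ^ 2)⁻¹ := by
    rw [← prod_abs_inv_nodalWeight]
    simp_rw [abs_inv, Finset.prod_inv_distrib, inv_inv]
  have hdet : |(vandermonde α).det| ≠ 0 :=
    abs_ne_zero.2 (det_vandermonde_ne_zero_iff.2 hα.injective)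
  rw [hfactor, det_mul, det_mul, det_diagonal, det_diagonal, abs_mul, abs_mul,
    abs_det_nodalFamilyMatrix (strictMono_tail_of_mem_interlacing hα.monotone hz).injective,
    Finset.abs_prod, hweight, Fin.prod_univ_succ]
  simp only [Fin.cases_zero, Fin.cases_succ, one_mul, Finset.prod_const, Finset.card_univ,
    Fintype.card_fin, abs_pow, abs_neg, abs_of_pos hz.1]
  field_simp

lemma hasFDerivAt_residues (α z : Fin (d + 1) → ℝ) :
    HasFDerivAt (residues α) (residuesJacobian α z).toLin'.toContinuousLinearMap z := by
  rw [hasFDerivAt_pi']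
  intro j
  have hcoord (k : Fin (d + 1)) :
      HasFDerivAt (fun z : Fin (d + 1) → ℝ => z k) (ContinuousLinearMap.proj k) z :=
    (ContinuousLinearMap.proj k : (Fin (d + 1) → ℝ) →L[ℝ] ℝ).hasFDerivAt
  have hprod := HasFDerivAt.finsetProd (u := Finset.univ)
    fun (i : Fin d) _ => (hcoord i.succ).const_sub (α j)
  refine (((hcoord 0).mul hprod).const_mul (nodalWeight Finset.univ α j)).congr_fderiv ?_
  ext v
  simp only [ContinuousLinearMap.comp_apply, ContinuousLinearMap.proj_apply,
    LinearMap.coe_toContinuousLinearMap', toLin'_apply, mulVec, dotProduct, residuesJacobian,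
    of_apply, Fin.sum_univ_succ, nodalFamilyMatrix, nodalFamily, Fin.cases_zero, Fin.cases_succ,
    eval_nodal, _root_.add_apply, _root_.smul_apply, smul_eq_mul, _root_.sum_apply,
    _root_.neg_apply, Finset.mul_sum, mul_add]
  rw [add_comm]
  congr 1
  · ring
  · exact Finset.sum_congr rfl fun i _ => by ring

end Jacobian

section DixonAnderson

variable {d : ℕ} {α : Fin (d + 1) → ℝ}

lemma interlacing_eq_univ_pi (α : Fin (d + 1) → ℝ) :
    interlacing α = Set.univ.pi (Fin.cons (Set.Ioi 0)
      fun i : Fin d => Set.Ioo (α i.castSucc) (α i.succ) : Fin (d + 1) → Set ℝ) := by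
  ext z
  simp [interlacing, Fin.forall_fin_succ]

lemma measurableSet_interlacing (α : Fin (d + 1) → ℝ) : MeasurableSet (interlacing α) := by
  rw [interlacing_eq_univ_pi]
  exact MeasurableSet.univ_pi (Fin.cases measurableSet_Ioi fun i => measurableSet_Ioo)

lemma measurableSet_forall_pos {N : ℕ} : MeasurableSet {t : Fin N → ℝ | ∀ j, 0 < t j} := by
  measurability

lemma ae_pos_gammaMeasure {a r : ℝ} : ∀ᵐ x ∂gammaMeasure a r, 0 < x := by
  have hpdf : Measurable (gammaPDF a r) := (measurable_gammaPDFReal a r).ennreal_ofReal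
  rw [gammaMeasure, ae_withDensity_iff hpdf]
  filter_upwards [Measure.ae_ne volume (0 : ℝ)] with x hx hx'
  by_contra hneg
  exact hx' (gammaPDF_of_neg (lt_of_le_of_ne (not_lt.1 hneg) hx))

lemma ae_forall_pos_pi_gammaMeasure {s : Fin (d + 1) → ℝ} (hs : ∀ j, 0 < s j) {r : ℝ}
    (hr : 0 < r) : ∀ᵐ t ∂Measure.pi fun j => gammaMeasure (s j) r, ∀ j, 0 < t j := by
  have hprob (j : Fin (d + 1)) := isProbabilityMeasure_gammaMeasure (hs j) hr
  exact ae_all_iff.2 fun j => (Measure.tendsto_eval_ae_ae (i := j)).eventually ae_pos_gammaMeasure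

lemma integral_pi_gammaMeasure_eq_integral_interlacing {s : Fin (d + 1) → ℝ} (hs : ∀ j, 0 < s j)
    {r : ℝ} (hr : 0 < r) (hα : StrictMono α) {E : Type*} [NormedAddCommGroup E] [NormedSpace ℝ E]
    (h : (Fin (d + 1) → ℝ) → E) :
    ∫ t, h t ∂Measure.pi (fun j => gammaMeasure (s j) r) = ∫ z in interlacing α,
      (z 0 ^ d * |(vandermonde fun i : Fin d => z i.succ).det| / |(vandermonde α).det| *
        ∏ j, gammaPDFReal (s j) r (residues α z j)) • h (residues α z) := by
  have hprob (j : Fin (d + 1)) := isProbabilityMeasure_gammaMeasure (hs j) hr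
  have hpdf (j : Fin (d + 1)) : Measurable (gammaPDF (s j) r) :=
    (measurable_gammaPDFReal (s j) r).ennreal_ofReal
  have hpdf_top (j : Fin (d + 1)) (t : Fin (d + 1) → ℝ) : gammaPDF (s j) r (t j) < ∞ :=
    ENNReal.ofReal_lt_top
  have hpi : Measure.pi (fun j => gammaMeasure (s j) r) =
      volume.withDensity fun t => ∏ j, gammaPDF (s j) r (t j) := by
    have (j : Fin (d + 1)) : SigmaFinite (volume.withDensity (gammaPDF (s j) r)) :=
      inferInstanceAs (SigmaFinite (gammaMeasure (s j) r))
    exact pi_withDensity hpdf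
  have hrestrict : (Measure.pi fun j => gammaMeasure (s j) r).restrict {t | ∀ j, 0 < t j} = _ :=
    Measure.restrict_eq_self_of_ae_mem (ae_forall_pos_pi_gammaMeasure hs hr)
  rw [← hrestrict, hpi,
    setIntegral_withDensity_eq_setIntegral_toReal_smul (by fun_prop)
      (Eventually.of_forall fun t => ENNReal.prod_lt_top fun j _ => hpdf_top j t) _
      measurableSet_forall_pos,
    ← residues_image_interlacing hα, integral_image_eq_integral_abs_det_fderiv_smul volume
      (measurableSet_interlacing α) (fun z _ => (hasFDerivAt_residues α z).hasFDerivWithinAt)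
      (injOn_residues hα)]
  refine setIntegral_congr_fun (measurableSet_interlacing α) fun z hz => ?_
  simp only [ContinuousLinearMap.det, LinearMap.coe_toContinuousLinearMap, LinearMap.det_toLin',
    abs_det_residuesJacobian hα hz, smul_smul, ENNReal.toReal_prod, gammaPDF,
    ENNReal.toReal_ofReal (gammaPDFReal_nonneg (hs _) hr _)]

lemma residues_zero_rpow (hα : StrictMono α) {z : Fin (d + 1) → ℝ} (hz : z ∈ interlacing α)
    (q : ℝ) : residues α z 0 ^ q =
      z 0 ^ q * ((∏ i : Fin d, (z i.succ - α 0) ^ q) * ∏ i : Fin d, (α i.succ - α 0) ^ (-q)) := by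
  have hzα (i : Fin d) : 0 < z i.succ - α 0 :=
    sub_pos.2 ((hα.monotone (Fin.zero_le _)).trans_lt (hz.2 i).1)
  have hαα (i : Fin d) : 0 < α i.succ - α 0 := sub_pos.2 (hα (Fin.succ_pos i))
  have hfactor (i : Fin d) : (α 0 - z i.succ) / (α 0 - α ((0 : Fin (d + 1)).succAbove i)) =
      (z i.succ - α 0) / (α i.succ - α 0) := by
    rw [Fin.zero_succAbove, ← neg_sub (z i.succ), ← neg_sub (α i.succ), neg_div_neg_eq]
  rw [residues_eq_mul_prod_div, Finset.prod_congr rfl fun i _ => hfactor i,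
    Real.mul_rpow hz.1.le (Finset.prod_nonneg fun i _ => (div_pos (hzα i) (hαα i)).le),
    ← Real.finsetProd_rpow _ _ fun i _ => (div_pos (hzα i) (hαα i)).le, ← Finset.prod_mul_distrib]
  congr 1
  refine Finset.prod_congr rfl fun i _ => ?_
  rw [Real.div_rpow (hzα i).le (hαα i).le, Real.rpow_neg (hαα i).le, div_eq_mul_inv]

lemma prod_gammaPDFReal_residues (hα : StrictMono α) {z : Fin (d + 1) → ℝ}
    (hz : z ∈ interlacing α) (q r : ℝ) :
    ∏ j, gammaPDFReal ((Fin.cons q fun _ => 1 : Fin (d + 1) → ℝ) j) r (residues α z j) =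
      r ^ q * r ^ d / Real.Gamma q * (z 0 ^ (q - 1) * Real.exp (-(r * z 0))) *
        ((∏ i : Fin d, (z i.succ - α 0) ^ (q - 1)) *
          ∏ i : Fin d, (α i.succ - α 0) ^ (1 - q)) := by
  have hexp : Real.exp (-(r * z 0)) = Real.exp (-(r * residues α z 0)) *
      ∏ i : Fin d, Real.exp (-(r * residues α z i.succ)) := by
    rw [← sum_residues hα.injective z, Fin.sum_univ_succ, mul_add, neg_add, Real.exp_add,
      Finset.mul_sum, ← Finset.sum_neg_distrib, Real.exp_sum]
  have hpdf (j : Fin (d + 1)) (a : ℝ) : gammaPDFReal a r (residues α z j) =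
      r ^ a / Real.Gamma a * residues α z j ^ (a - 1) * Real.exp (-(r * residues α z j)) :=
    if_pos (residues_pos hα hz j).le
  simp only [Fin.prod_univ_succ, Fin.cons_zero, Fin.cons_succ, hpdf, hexp, Real.rpow_one,
    Real.Gamma_one, div_one, sub_self, Real.rpow_zero, Finset.prod_mul_distrib,
    Finset.prod_const, Finset.card_univ, Fintype.card_fin, residues_zero_rpow hα hz, neg_sub]
  ring

lemma integral_interlacing_mul_det {w : ℝ → ℂ} (hw : IntegrableOn w (Set.Ioi 0))
    {ψ : Fin d → ℝ → ℂ} (hψ : ∀ b i, IntegrableOn (ψ b) (Set.Ioo (α (Fin.castSucc i)) (α i.succ))) :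
    ∫ z in interlacing α, w (z 0) * (of fun b i : Fin d => ψ b (z i.succ)).det =
      (∫ r in Set.Ioi (0 : ℝ), w r) *
        (of fun b i : Fin d => ∫ x in Set.Ioo (α i.castSucc) (α i.succ), ψ b x).det := by
  set S : Fin (d + 1) → Set ℝ :=
    Fin.cons (Set.Ioi 0) fun i : Fin d => Set.Ioo (α i.castSucc) (α i.succ) with hS
  set f : Equiv.Perm (Fin d) → Fin (d + 1) → ℝ → ℂ :=
    fun σ => Fin.cons w fun i => ψ (σ i) with hf
  have hint (σ : Equiv.Perm (Fin d)) (j : Fin (d + 1)) :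
      Integrable (f σ j) (volume.restrict (S j)) := by
    refine Fin.cases ?_ (fun i => ?_) j
    exacts [hw, hψ (σ i) i]
  have hexpand (z : Fin (d + 1) → ℝ) : w (z 0) * (of fun b i : Fin d => ψ b (z i.succ)).det =
      ∑ σ : Equiv.Perm (Fin d), ((Equiv.Perm.sign σ : ℤ) : ℂ) * ∏ j, f σ j (z j) := by
    rw [det_apply', Finset.mul_sum]
    refine Finset.sum_congr rfl fun σ _ => ?_
    simp only [Fin.prod_univ_succ, hf, Fin.cons_zero, Fin.cons_succ, of_apply]
    ring
  rw [interlacing_eq_univ_pi, volume_pi, Measure.restrict_pi_pi]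
  simp_rw [hexpand]
  rw [integral_finsetSum _ fun σ _ => (Integrable.fintype_prod_dep (hint σ)).const_mul _,
    det_apply', Finset.mul_sum]
  refine Finset.sum_congr rfl fun σ _ => ?_
  rw [integral_const_mul, integral_fintype_prod_eq_prod, Fin.prod_univ_succ]
  simp only [hf, hS, Fin.cons_zero, Fin.cons_succ, of_apply]
  ring

end DixonAnderson

section SphericalIntegral

variable {m d : ℕ} {l : Fin (m + 1) → Fin (d + 1)} {A : OG (m + 1)} {e : Fin (m + 1) → ℝ}
  {μ : Measure (OG (m + 1))} [μ.IsMulLeftInvariant] [IsProbabilityMeasure μ]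
  {α : Fin (d + 1) → ℝ}

/-- The squared norms of the blocks, cut out by the fibres of `l`, of the coordinate vector of
`kᵀ e` in the orthonormal basis given by the rows of `A`. For Haar distributed `k` and a unit
vector `e` they are Dirichlet distributed. -/
def blockWeights (l : Fin (m + 1) → Fin (d + 1)) (A : OG (m + 1)) (e : Fin (m + 1) → ℝ)
    (k : OG (m + 1)) : Fin (d + 1) → ℝ :=
  blockNormSq l (A.1 *ᵥ (k.1ᵀ *ᵥ e))

lemma measurable_blockWeights : Measurable (blockWeights l A e) := by
  have hcont : Continuous fun k : OG (m + 1) => A.1 *ᵥ (k.1ᵀ *ᵥ e) := by fun_prop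
  exact ((continuous_blockNormSq l).comp hcont).measurable

lemma map_blockWeights (hl : l.Surjective) (he : e ⬝ᵥ e = 1) {Y : Type*} [MeasurableSpace Y]
    {ρ : (Fin (d + 1) → ℝ) → Y} (hρ : Measurable ρ)
    (hsmul : ∀ c : ℝ, 0 < c → ∀ t, ρ (c • t) = ρ t) :
    μ.map (fun k => ρ (blockWeights l A e k)) =
      (Measure.pi fun j => gammaMeasure (Fintype.card {i // l i = j} / 2) (1 / 2)).map ρ := by
  have hA : Measurable (A.1 *ᵥ ·) :=
    Continuous.measurable (by fun_prop : Continuous fun x : Fin (m + 1) → ℝ => A.1 *ᵥ x)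
  have hl' : Measurable (blockNormSq l) := (continuous_blockNormSq l).measurable
  calc μ.map (fun k => ρ (blockWeights l A e k))
      = (Measure.pi fun _ => gaussianReal 0 1).map ((ρ ∘ blockNormSq l) ∘ (A.1 *ᵥ ·)) := by
        refine map_transpose_mulVec_eq_map_pi_gaussianReal μ he ((hρ.comp hl').comp hA)
          fun c hc x => ?_
        simp only [Function.comp_apply, mulVec_smul, blockNormSq_smul]
        exact hsmul _ (by positivity) _
    _ = _ := by
        rw [← Measure.map_map (hρ.comp hl') hA, map_mulVec_pi_gaussianReal,
          ← Measure.map_map hρ hl', map_blockNormSq_pi_gaussianReal hl]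

lemma card_fiber_half_pos (hl : l.Surjective) (j : Fin (d + 1)) :
    0 < (Fintype.card {i // l i = j} : ℝ) / 2 :=
  half_pos (Nat.cast_pos.2 (Fintype.card_pos_iff.2 (nonempty_subtype.2 (hl j))))

lemma ae_forall_pos_blockWeights (hl : l.Surjective) (he : e ⬝ᵥ e = 1) :
    ∀ᵐ k ∂μ, ∀ j, 0 < blockWeights l A e k j := by
  set P : (Fin (d + 1) → ℝ) → Prop := fun t => ∀ j, 0 < t j
  have hP : Measurable P := measurableSet_setOfPred.1 measurableSet_forall_pos
  have hsmul (c : ℝ) (hc : 0 < c) (t) : P (c • t) = P t :=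
    propext (forall_congr' fun j => mul_pos_iff_of_pos_left hc)
  have hlaw := (ae_map_iff hP.aemeasurable (p := id) (by trivial)).2
    (ae_forall_pos_pi_gammaMeasure (card_fiber_half_pos hl) one_half_pos)
  rw [← map_blockWeights hl he hP hsmul (μ := μ) (A := A)] at hlaw
  exact (ae_map_iff (hP.comp measurable_blockWeights).aemeasurable (by trivial)).1 hlaw

lemma exists_measurable_homogeneous_comp_residues (hα : StrictMono α) {g : (Fin d → ℝ) → ℂ}
    (hg : Measurable g) : ∃ H : (Fin (d + 1) → ℝ) → ℂ, Measurable H ∧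
      (∀ c : ℝ, 0 < c → ∀ t, H (c • t) = H t) ∧
      ∀ z ∈ interlacing α, H (residues α z) = g fun i => z i.succ := by
  have hcont : Continuous (residues α) :=
    continuous_iff_continuousAt.2 fun z => (hasFDerivAt_residues α z).continuousAt
  have hemb := hcont.continuousOn.measurableEmbedding (measurableSet_interlacing α)
    (injOn_residues hα)
  set H := Function.extend ((interlacing α).domRestrict (residues α))
    (fun z => g fun i => z.1 i.succ) 0
  have hH : ∀ z ∈ interlacing α, H (residues α z) = g fun i => z i.succ :=
    fun z hz => hemb.injective.extend_apply _ _ ⟨z, hz⟩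
  have hH_zero (t : Fin (d + 1) → ℝ) (ht : t ∉ residues α '' interlacing α) : H t = 0 :=
    Function.extend_apply' _ _ _ fun ⟨z, hz⟩ => ht ⟨z.1, z.2, hz⟩
  have htail : Measurable fun (z : interlacing α) (i : Fin d) => z.1 i.succ :=
    measurable_pi_lambda _ fun i => (measurable_pi_apply i.succ).comp measurable_subtype_coe
  refine ⟨H, hemb.measurable_extend (hg.comp htail) measurable_zero, fun c hc t => ?_, hH⟩
  by_cases ht : t ∈ residues α '' interlacing α
  · obtain ⟨z, hz, rfl⟩ := ht
    have hscale : c • residues α z = residues α (Fin.cons (c * z 0) fun i => z i.succ) := by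
      ext j; simp only [residues, Pi.smul_apply, smul_eq_mul, Fin.cons_zero, Fin.cons_succ]; ring
    rw [hscale, hH z hz, hH _ ⟨by simpa using mul_pos hc hz.1, fun i => by simpa using hz.2 i⟩]
    simp only [Fin.cons_succ]
  · have ht' : c • t ∉ residues α '' interlacing α := by
      rw [residues_image_interlacing hα] at ht ⊢
      exact fun h => ht fun j => (mul_pos_iff_of_pos_left hc).1 (h j)
    rw [hH_zero t ht, hH_zero _ ht']

lemma integral_eq_integral_interlacing (hl : l.Surjective) (he : e ⬝ᵥ e = 1) (hα : StrictMono α)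
    {F : OG (m + 1) → ℂ} {g : (Fin d → ℝ) → ℂ} (hg : Measurable g)
    (hF : ∀ k, ∀ z ∈ interlacing α, blockWeights l A e k = residues α z →
      F k = g fun i => z i.succ) :
    ∫ k, F k ∂μ = ∫ z in interlacing α,
      (z 0 ^ d * |(vandermonde fun i : Fin d => z i.succ).det| / |(vandermonde α).det| *
        ∏ j, gammaPDFReal (Fintype.card {i // l i = j} / 2) (1 / 2) (residues α z j)) •
          g fun i => z i.succ := by
  obtain ⟨H, hH, hsmul, hHg⟩ := exists_measurable_homogeneous_comp_residues hα hg
  calc ∫ k, F k ∂μ = ∫ k, H (blockWeights l A e k) ∂μ := by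
        refine integral_congr_ae ?_
        filter_upwards [ae_forall_pos_blockWeights hl he] with k hk
        obtain ⟨z, hz, hzk⟩ : blockWeights l A e k ∈ residues α '' interlacing α := by
          rwa [residues_image_interlacing hα]
        rw [hF k z hz hzk.symm, ← hzk, hHg z hz]
    _ = ∫ y, y ∂μ.map fun k => H (blockWeights l A e k) :=
        (integral_map (hH.comp measurable_blockWeights).aemeasurable
          aestronglyMeasurable_id).symm
    _ = ∫ t, H t ∂Measure.pi fun j => gammaMeasure (Fintype.card {i // l i = j} / 2) (1 / 2) := by
        rw [map_blockWeights hl he hH hsmul]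
        exact integral_map hH.aemeasurable aestronglyMeasurable_id
    _ = _ := by
        rw [integral_pi_gammaMeasure_eq_integral_interlacing (card_fiber_half_pos hl)
          one_half_pos hα]
        exact setIntegral_congr_fun (measurableSet_interlacing α) fun z hz => by
          simp only [hHg z hz]

/-- The constant `Γ(d + q) / Γ(q)` of the Dixon–Anderson density of `d` points interlacing `d + 1`
points with Dirichlet parameters `(q, 1, …, 1)`. -/
def kernelConst (d : ℕ) (q : ℝ) : ℝ := Real.Gamma (d + q) / Real.Gamma q

lemma kernelConst_pos (d : ℕ) {q : ℝ} (hq : 0 < q) : 0 < kernelConst d q :=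
  div_pos (Real.Gamma_pos_of_pos (by positivity)) (Real.Gamma_pos_of_pos hq)

lemma integral_radial {q r : ℝ} (hq : 0 < q) (hr : 0 < r) :
    ∫ x in Set.Ioi (0 : ℝ), r ^ q * r ^ d / Real.Gamma q *
      (x ^ d * (x ^ (q - 1) * Real.exp (-(r * x)))) = kernelConst d q := by
  have hpow : ∀ x ∈ Set.Ioi (0 : ℝ), x ^ d * (x ^ (q - 1) * Real.exp (-(r * x))) =
      x ^ (d + q - 1) * Real.exp (-(r * x)) := fun x hx => by
    rw [← mul_assoc, ← Real.rpow_natCast, ← Real.rpow_add hx, add_sub_assoc]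
  rw [integral_const_mul, setIntegral_congr_fun measurableSet_Ioi hpow,
    Real.integral_rpow_mul_exp_neg_mul_Ioi (by positivity) hr, one_div, Real.inv_rpow hr.le,
    Real.rpow_add hr, Real.rpow_natCast, kernelConst]
  have := (Real.rpow_pos_of_pos hr q).ne'
  field_simp

theorem integral_eq_det_of_blockWeights {κ : ℕ} (hκ : 0 < κ)
    (hl₀ : Fintype.card {i // l i = 0} = κ)
    (hl : ∀ j : Fin d, Fintype.card {i // l i = j.succ} = 2) (he : e ⬝ᵥ e = 1)
    (hα : StrictMono α) {F : OG (m + 1) → ℂ} {g : (Fin d → ℝ) → ℂ} (hg : Measurable g)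
    (hF : ∀ k, ∀ z ∈ interlacing α, blockWeights l A e k = residues α z →
      F k = g fun i => z i.succ)
    {ψ : Fin d → ℝ → ℂ} (hψ : ∀ b i, IntegrableOn (ψ b) (Set.Ioo (α (Fin.castSucc i)) (α i.succ)))
    {C : ℂ} (hC : ∀ z ∈ interlacing α,
      ((|(vandermonde fun i : Fin d => z i.succ).det| *
        ∏ i : Fin d, (z i.succ - α 0) ^ ((κ : ℝ) / 2 - 1) : ℝ) : ℂ) * g (fun i => z i.succ) =
      C * (of fun b i : Fin d => ψ b (z i.succ)).det) :
    ∫ k, F k ∂μ = (kernelConst d (κ / 2) : ℂ) *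
      (((∏ i : Fin d, (α i.succ - α 0) ^ (1 - (κ : ℝ) / 2)) / |(vandermonde α).det| : ℝ) : ℂ) * C *
        (of fun b i : Fin d => ∫ x in Set.Ioo (α i.castSucc) (α i.succ), ψ b x).det := by
  set q : ℝ := κ / 2
  have hq : 0 < q := by positivity
  have hsurj : l.Surjective := fun j => by
    have hcard : 0 < Fintype.card {i // l i = j} := by
      refine Fin.cases ?_ (fun i => ?_) j
      exacts [hl₀ ▸ hκ, (hl i).symm ▸ two_pos]
    exact nonempty_subtype.1 (Fintype.card_pos_iff.1 hcard)
  have hshape (j : Fin (d + 1)) : (Fintype.card {i // l i = j} : ℝ) / 2 =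
      (Fin.cons q fun _ => 1 : Fin (d + 1) → ℝ) j := by
    refine Fin.cases ?_ (fun i => ?_) j
    · rw [hl₀, Fin.cons_zero]
    · rw [hl i, Fin.cons_succ, Nat.cast_ofNat, div_self two_ne_zero]
  set w : ℝ → ℝ := fun x =>
    (1 / 2) ^ q * (1 / 2) ^ d / Real.Gamma q * (x ^ d * (x ^ (q - 1) * Real.exp (-(1 / 2 * x))))
  have hw_int : ∫ x in Set.Ioi 0, w x = kernelConst d q := integral_radial hq one_half_pos
  have hw : IntegrableOn (fun x => (w x : ℂ)) (Set.Ioi 0) :=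
    Integrable.ofReal <| Integrable.of_integral_ne_zero <|
      hw_int.trans_ne (kernelConst_pos d hq).ne'
  have hdensity : ∀ z ∈ interlacing α,
      (z 0 ^ d * |(vandermonde fun i : Fin d => z i.succ).det| / |(vandermonde α).det| *
        ∏ j, gammaPDFReal (Fintype.card {i // l i = j} / 2) (1 / 2) (residues α z j)) •
          g (fun i => z i.succ) =
      ((((∏ i : Fin d, (α i.succ - α 0) ^ (1 - q)) / |(vandermonde α).det| : ℝ) : ℂ) * C) *
        ((w (z 0) : ℂ) * (of fun b i : Fin d => ψ b (z i.succ)).det) := fun z hz => by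
    simp only [hshape]
    rw [prod_gammaPDFReal_residues hα hz, Complex.real_smul, mul_assoc _ C, mul_left_comm C,
      ← hC z hz]
    push_cast [w]
    ring
  rw [integral_eq_integral_interlacing hsurj he hα hg hF,
    setIntegral_congr_fun (measurableSet_interlacing α) hdensity, integral_const_mul,
    integral_interlacing_mul_det hw hψ, integral_complex_ofReal, hw_int]
  ring

end SphericalIntegral

section Truncation

open Polynomial

variable {N : ℕ}

lemma eval_charpoly_eq_det_smul_one_sub (M : Matrix (Fin N) (Fin N) ℝ) (t : ℝ) :
    M.charpoly.eval t = (t • (1 : Matrix (Fin N) (Fin N) ℝ) - M).det := by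
  rw [eval_charpoly, scalar_apply, smul_one_eq_diagonal]

lemma exists_orthogonalGroup_eq_conj_diagonal {S : Matrix (Fin N) (Fin N) ℝ} (hS : Sᵀ = S) :
    ∃ (A : OG N) (ev : Fin N → ℝ), S = A.1ᵀ * diagonal ev * A.1 := by
  have hH : S.IsHermitian := by
    rw [IsHermitian, conjTranspose_eq_transpose_of_trivial, hS]
  refine ⟨star hH.eigenvectorUnitary, hH.eigenvalues, ?_⟩
  have hspec := hH.spectral_theorem
  rwa [Unitary.conjStarAlgAut_apply] at hspec

lemma dotProduct_inv_conj_diagonal_mulVec (A : OG N) {v : Fin N → ℝ} (hv : ∀ i, v i ≠ 0)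
    (u : Fin N → ℝ) :
    u ⬝ᵥ ((A.1ᵀ * diagonal v * A.1)⁻¹ *ᵥ u) = ∑ i, (A.1 *ᵥ u) i ^ 2 / v i := by
  have hdiag : diagonal v * diagonal v⁻¹ = 1 := by
    rw [diagonal_mul_diagonal, ← diagonal_one]
    exact congrArg diagonal (funext fun i => mul_inv_cancel₀ (hv i))
  have hinv : (A.1ᵀ * diagonal v * A.1)⁻¹ = A.1ᵀ * diagonal v⁻¹ * A.1 := by
    refine inv_eq_right_inv ?_
    calc A.1ᵀ * diagonal v * A.1 * (A.1ᵀ * diagonal v⁻¹ * A.1)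
        = A.1ᵀ * (diagonal v * (A.1 * A.1ᵀ) * diagonal v⁻¹) * A.1 := by
          simp only [Matrix.mul_assoc]
      _ = 1 := by
          rw [orthogonalGroup_mul_transpose, Matrix.mul_one, hdiag, Matrix.mul_one,
            orthogonalGroup_transpose_mul]
  rw [hinv, ← mulVec_mulVec, ← mulVec_mulVec, dotProduct_mulVec, vecMul_transpose, dotProduct]
  refine Finset.sum_congr rfl fun i _ => ?_
  rw [mulVec_diagonal, Pi.inv_apply]
  ring

lemma dotProduct_transpose_mulVec_self (M : Matrix (Fin N) (Fin N) ℝ) (u : Fin N → ℝ) :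
    u ⬝ᵥ (Mᵀ *ᵥ u) = u ⬝ᵥ (M *ᵥ u) := by
  rw [mulVec_transpose, dotProduct_comm, dotProduct_mulVec]

section SkewSymmetric

variable {X : Matrix (Fin N) (Fin N) ℝ} (hX : Xᵀ = -X)
include hX

lemma transpose_smul_one_sub_of_skew (t : ℝ) : (t • 1 - X)ᵀ = t • 1 + X := by
  rw [transpose_sub, transpose_smul, transpose_one, hX, sub_neg_eq_add]

lemma transpose_mul_self_smul_one_sub_of_skew (t : ℝ) :
    (t • 1 - X)ᵀ * (t • 1 - X) = t ^ 2 • 1 - X * X := by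
  rw [transpose_smul_one_sub_of_skew hX]
  simp only [add_mul, mul_sub, smul_mul_assoc, mul_smul_comm, one_mul, mul_one, smul_add, smul_smul,
    pow_two]
  abel

/-- The symmetric part of the resolvent `R = (t - X)⁻¹` is `(R + Rᵀ) / 2 = t (t² - X²)⁻¹`. -/
lemma dotProduct_inv_smul_one_sub_mulVec_of_skew {t : ℝ}
    (ht : (t • (1 : Matrix (Fin N) (Fin N) ℝ) - X).det ≠ 0) (u : Fin N → ℝ) :
    u ⬝ᵥ ((t • 1 - X)⁻¹ *ᵥ u) = t * (u ⬝ᵥ ((t ^ 2 • 1 - X * X)⁻¹ *ᵥ u)) := by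
  set B : Matrix (Fin N) (Fin N) ℝ := t • 1 - X
  have hB : IsUnit B.det := ht.isUnit
  have hBt : IsUnit Bᵀ.det := by rwa [det_transpose]
  have hadd : B + Bᵀ = (2 * t) • 1 := by
    rw [transpose_smul_one_sub_of_skew hX, sub_add_add_cancel, ← add_smul, two_mul]
  have hsym : B⁻¹ + B⁻¹ᵀ = (2 * t) • (t ^ 2 • 1 - X * X)⁻¹ := by
    rw [← transpose_mul_self_smul_one_sub_of_skew hX, Matrix.mul_inv_rev, transpose_nonsing_inv]
    calc B⁻¹ + Bᵀ⁻¹ = B⁻¹ * (B + Bᵀ) * Bᵀ⁻¹ := by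
          rw [Matrix.mul_add, Matrix.add_mul, nonsing_inv_mul _ hB, Matrix.one_mul,
            Matrix.mul_assoc, mul_nonsing_inv _ hBt, Matrix.mul_one, add_comm]
      _ = _ := by rw [hadd, mul_smul_comm, Matrix.mul_one, smul_mul_assoc]
  have hquad := congrArg (fun M => u ⬝ᵥ (M *ᵥ u)) hsym
  simp only [add_mulVec, dotProduct_add, dotProduct_transpose_mulVec_self, smul_mulVec,
    dotProduct_smul, smul_eq_mul] at hquad
  linarith

lemma conj_transpose_of_skew (k : OG N) : (k.1 * X * k.1ᵀ)ᵀ = -(k.1 * X * k.1ᵀ) := by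
  simp only [transpose_mul, transpose_transpose, hX, Matrix.mul_assoc, Matrix.neg_mul,
    Matrix.mul_neg]

end SkewSymmetric

lemma charpoly_orthogonalGroup_conj (k : OG N) (X : Matrix (Fin N) (Fin N) ℝ) :
    (k.1 * X * k.1ᵀ).charpoly = X.charpoly := by
  rw [charpoly_mul_comm, ← Matrix.mul_assoc, orthogonalGroup_transpose_mul, Matrix.one_mul]

lemma smul_one_sub_conj (k : OG N) (X : Matrix (Fin N) (Fin N) ℝ) (t : ℝ) :
    t • (1 : Matrix (Fin N) (Fin N) ℝ) - k.1 * X * k.1ᵀ = k.1 * (t • 1 - X) * k.1ᵀ := by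
  rw [Matrix.mul_sub, Matrix.sub_mul, mul_smul_comm, Matrix.mul_one, smul_mul_assoc,
    orthogonalGroup_mul_transpose]

lemma inv_orthogonalGroup_conj (k : OG N) (B : Matrix (Fin N) (Fin N) ℝ) :
    (k.1 * B * k.1ᵀ)⁻¹ = k.1 * B⁻¹ * k.1ᵀ := by
  rw [Matrix.mul_inv_rev, Matrix.mul_inv_rev, inv_eq_right_inv (orthogonalGroup_mul_transpose k),
    inv_eq_right_inv (orthogonalGroup_transpose_mul k), Matrix.mul_assoc]

lemma det_truncate {B : Matrix (Fin (m + 1)) (Fin (m + 1)) ℝ} (hB : B.det ≠ 0) :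
    (truncate B).det = B.det * (Pi.single (Fin.last m) 1 ⬝ᵥ (B⁻¹ *ᵥ Pi.single (Fin.last m) 1)) := by
  have hentry : adjugate B (Fin.last m) (Fin.last m) = (truncate B).det := by
    rw [adjugate_fin_succ_eq_det_submatrix, Even.neg_one_pow ⟨_, rfl⟩, one_mul,
      Fin.succAbove_last]
    rfl
  rw [mulVec_single_one, single_one_dotProduct, col_apply, inv_def, Matrix.smul_apply, hentry,
    Ring.inverse_eq_inv, smul_eq_mul, mul_inv_cancel_left₀ hB]

lemma truncate_smul_one_sub (M : Matrix (Fin (m + 1)) (Fin (m + 1)) ℝ) (t : ℝ) :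
    truncate (t • 1 - M) = t • 1 - truncate M := by
  ext i j
  simp [truncate, one_apply]

lemma eval_charpoly_truncate_conj {X : Matrix (Fin (m + 1)) (Fin (m + 1)) ℝ} (hX : Xᵀ = -X)
    {t : ℝ} (ht : (t • (1 : Matrix (Fin (m + 1)) (Fin (m + 1)) ℝ) - X).det ≠ 0)
    (k : OG (m + 1)) {u : Fin (m + 1) → ℝ} (hu : u = k.1ᵀ *ᵥ Pi.single (Fin.last m) 1) :
    (truncate (k.1 * X * k.1ᵀ)).charpoly.eval t =
      X.charpoly.eval t * (t * (u ⬝ᵥ ((t ^ 2 • 1 - X * X)⁻¹ *ᵥ u))) := by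
  have hdet : (t • (1 : Matrix (Fin (m + 1)) (Fin (m + 1)) ℝ) - k.1 * X * k.1ᵀ).det =
      X.charpoly.eval t := by
    rw [← eval_charpoly_eq_det_smul_one_sub, charpoly_orthogonalGroup_conj]
  rw [eval_charpoly_eq_det_smul_one_sub, ← truncate_smul_one_sub, det_truncate, hdet,
    smul_one_sub_conj, inv_orthogonalGroup_conj, ← mulVec_mulVec, ← mulVec_mulVec,
    dotProduct_mulVec, ← mulVec_transpose, ← hu, dotProduct_inv_smul_one_sub_mulVec_of_skew hX ht]
  rwa [hdet, eval_charpoly_eq_det_smul_one_sub]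

lemma exists_card_fiber_eq_of_prod_add_eq {ι : Type*} [Fintype ι] {f : ι → ℝ}
    {α : Fin (d + 1) → ℝ} (hα : Function.Injective α) {κ : Fin (d + 1) → ℕ}
    (h : ∀ y, 0 < y → ∏ i, (y + f i) = ∏ j, (y + α j) ^ κ j) :
    ∃ l : ι → Fin (d + 1), (∀ i, α (l i) = f i) ∧ ∀ j, Fintype.card {i // l i = j} = κ j := by
  classical
  have hpoly : ∏ i, (X - C (-f i)) = ∏ j, (X - C (-α j)) ^ κ j :=
    eq_of_infinite_eval_eq _ _ <| (Set.Ioi_infinite (0 : ℝ)).mono fun y hy => by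
      simpa [eval_prod] using h y hy
  have hroots : Finset.univ.val.map (fun i => -f i) =
      Finset.univ.val.bind fun j => κ j • {-α j} := by
    rw [← roots_multiset_prod_X_sub_C (Finset.univ.val.map fun i => -f i), Multiset.map_map]
    change (∏ i, (X - C (-f i))).roots = _
    rw [hpoly, roots_prod _ _
      (Finset.prod_ne_zero_iff.2 fun j _ => pow_ne_zero _ (X_sub_C_ne_zero _))]
    simp only [roots_pow, roots_X_sub_C]
  have hcard (x : ℝ) : Fintype.card {i // f i = x} = ∑ j, if α j = x then κ j else 0 := by
    have hcount := congrArg (Multiset.count (-x)) hroots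
    rw [Multiset.count_map, Multiset.count_bind] at hcount
    simp only [Multiset.count_nsmul, Multiset.count_singleton, neg_inj, mul_ite, mul_one,
      mul_zero, eq_comm (a := x)] at hcount
    rw [Fintype.card_subtype]
    exact hcount
  have hmem (i : ι) : ∃ j, α j = f i := by
    by_contra! hne
    have := hcard (f i)
    simp only [hne, if_false, Finset.sum_const_zero, Fintype.card_eq_zero_iff] at this
    exact this.false ⟨i, rfl⟩
  choose l hl using hmem
  refine ⟨l, hl, fun j => ?_⟩
  have hiff (i : ι) : l i = j ↔ f i = α j := by rw [← hl i, hα.eq_iff]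
  rw [Fintype.card_congr (Equiv.subtypeEquivRight hiff), hcard]
  simp only [hα.eq_iff, Finset.sum_ite_eq', Finset.mem_univ, if_true]

lemma sum_residues_div {α : Fin (d + 1) → ℝ} (hα : Function.Injective α) (z : Fin (d + 1) → ℝ)
    {x : ℝ} (hx : ∀ j, x + α j ≠ 0) :
    (∑ j, residues α z j / (x + α j)) * ∏ j, (x + α j) = z 0 * ∏ i : Fin d, (x + z i.succ) := by
  have hneg {ι : Type} (s : Finset ι) (c : ι → ℝ) :
      (Lagrange.nodal s c).eval (-x) = (-1) ^ s.card * ∏ i ∈ s, (x + c i) := by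
    rw [Lagrange.eval_nodal, ← Finset.prod_const, ← Finset.prod_mul_distrib]
    exact Finset.prod_congr rfl fun i _ => by ring
  have heval := congrArg (eval (-x)) (residueNumerator_residues hα z)
  simp only [residueNumerator, eval_finsetSum, eval_C_mul, hneg, Finset.card_erase_of_mem,
    Finset.mem_univ, Finset.card_univ, Fintype.card_fin, Nat.add_sub_cancel,
    mul_left_comm _ ((-1 : ℝ) ^ d), ← Finset.mul_sum] at heval
  rw [← mul_left_cancel₀ (pow_ne_zero d (neg_ne_zero.2 one_ne_zero)) heval, Finset.sum_mul]
  refine Finset.sum_congr rfl fun j _ => ?_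
  rw [← Finset.mul_prod_erase _ _ (Finset.mem_univ j), ← mul_assoc, div_mul_cancel₀ _ (hx j)]

lemma sum_blockWeights (l : Fin (m + 1) → Fin (d + 1)) (A : OG (m + 1)) (e : Fin (m + 1) → ℝ)
    (k : OG (m + 1)) : ∑ j, blockWeights l A e k j = e ⬝ᵥ e := by
  have hnorm {M : Matrix (Fin (m + 1)) (Fin (m + 1)) ℝ} (hM : Mᵀ * M = 1) (u : Fin (m + 1) → ℝ) :
      (M *ᵥ u) ⬝ᵥ (M *ᵥ u) = u ⬝ᵥ u := by
    rw [dotProduct_mulVec, ← mulVec_transpose, mulVec_mulVec, hM, one_mulVec]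
  calc ∑ j, blockWeights l A e k j = (A.1 *ᵥ (k.1ᵀ *ᵥ e)) ⬝ᵥ (A.1 *ᵥ (k.1ᵀ *ᵥ e)) := by
        simp only [blockWeights, blockNormSq, Finset.sum_fiberwise, dotProduct, pow_two]
    _ = e ⬝ᵥ e := by
        rw [hnorm (orthogonalGroup_transpose_mul A),
          hnorm (by rw [transpose_transpose, orthogonalGroup_mul_transpose])]

lemma sq_smul_one_sub_mul_self_eq {X : Matrix (Fin N) (Fin N) ℝ} {A : OG N} {ev : Fin N → ℝ}
    (hA : -(X * X) = A.1ᵀ * diagonal ev * A.1) (t : ℝ) :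
    t ^ 2 • 1 - X * X = A.1ᵀ * diagonal (fun i => t ^ 2 + ev i) * A.1 := by
  have hdiag : diagonal (fun i => t ^ 2 + ev i) = t ^ 2 • 1 + diagonal ev := by
    rw [smul_one_eq_diagonal, diagonal_add]
  rw [hdiag, Matrix.mul_add, Matrix.add_mul, ← hA, mul_smul_comm, Matrix.mul_one, smul_mul_assoc,
    orthogonalGroup_transpose_mul, sub_eq_add_neg]

lemma eval_charpoly_sq_of_skew {X : Matrix (Fin N) (Fin N) ℝ} (hX : Xᵀ = -X) {A : OG N}
    {ev : Fin N → ℝ} (hA : -(X * X) = A.1ᵀ * diagonal ev * A.1) (t : ℝ) :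
    X.charpoly.eval t ^ 2 = ∏ i, (t ^ 2 + ev i) := by
  have hdetA : (A.1ᵀ).det * A.1.det = 1 := by
    rw [← det_mul, orthogonalGroup_transpose_mul, det_one]
  have hdet := congrArg det (transpose_mul_self_smul_one_sub_of_skew hX t)
  rw [sq_smul_one_sub_mul_self_eq hA, det_mul, det_transpose, det_mul, det_mul, mul_right_comm,
    hdetA, one_mul, det_diagonal] at hdet
  rw [eval_charpoly_eq_det_smul_one_sub, sq, hdet]

lemma eval_charpoly_truncate_conj_mul {X : Matrix (Fin (m + 1)) (Fin (m + 1)) ℝ} (hX : Xᵀ = -X)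
    {α : Fin (d + 1) → ℝ} (hα : StrictMono α) (hα₀ : 0 ≤ α 0) {l : Fin (m + 1) → Fin (d + 1)}
    {A : OG (m + 1)} (hA : -(X * X) = A.1ᵀ * diagonal (fun i => α (l i)) * A.1)
    {k : OG (m + 1)} {z : Fin (d + 1) → ℝ}
    (hz : blockWeights l A (Pi.single (Fin.last m) 1) k = residues α z) {t : ℝ} (ht : 0 < t) :
    (truncate (k.1 * X * k.1ᵀ)).charpoly.eval t * ∏ j, (t ^ 2 + α j) =
      X.charpoly.eval t * t * ∏ i : Fin d, (t ^ 2 + z i.succ) := by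
  have hpos (j : Fin (d + 1)) : 0 < t ^ 2 + α j :=
    add_pos_of_pos_of_nonneg (by positivity) (hα₀.trans (hα.monotone (Fin.zero_le j)))
  have hz₀ : z 0 = 1 := by
    rw [← sum_residues hα.injective z, ← hz, sum_blockWeights, single_one_dotProduct,
      Pi.single_eq_same]
  have hdet : (t • (1 : Matrix (Fin (m + 1)) (Fin (m + 1)) ℝ) - X).det ≠ 0 := by
    rw [← eval_charpoly_eq_det_smul_one_sub, ← pow_ne_zero_iff two_ne_zero,
      eval_charpoly_sq_of_skew hX hA]
    exact (Finset.prod_pos fun i _ => hpos (l i)).ne'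
  have hresolvent : ∑ i, (A.1 *ᵥ (k.1ᵀ *ᵥ Pi.single (Fin.last m) 1)) i ^ 2 / (t ^ 2 + α (l i)) =
      ∑ j, residues α z j / (t ^ 2 + α j) := by
    rw [← hz, ← Finset.sum_fiberwise (s := Finset.univ) (g := l)]
    refine Finset.sum_congr rfl fun j _ => ?_
    rw [blockWeights, blockNormSq, Finset.sum_div]
    exact Finset.sum_congr rfl fun i hi => by rw [(Finset.mem_filter.1 hi).2]
  rw [eval_charpoly_truncate_conj hX hdet k rfl, sq_smul_one_sub_mul_self_eq hA,
    dotProduct_inv_conj_diagonal_mulVec A fun i => (hpos (l i)).ne', hresolvent, mul_assoc,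
    mul_assoc, sum_residues_div hα.injective z fun j => (hpos j).ne', hz₀, one_mul, mul_assoc]

theorem exists_charpoly_truncate_conj_mul {X : Matrix (Fin (m + 1)) (Fin (m + 1)) ℝ}
    (hX : Xᵀ = -X) {α : Fin (d + 1) → ℝ} (hα : StrictMono α) (hα₀ : 0 ≤ α 0)
    {κ : Fin (d + 1) → ℕ} (hchar : X.charpoly ^ 2 = ∏ j, (Polynomial.X ^ 2 + C (α j)) ^ κ j) :
    ∃ (l : Fin (m + 1) → Fin (d + 1)) (A : OG (m + 1)),
      (∀ j, Fintype.card {i // l i = j} = κ j) ∧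
      ∀ k z, blockWeights l A (Pi.single (Fin.last m) 1) k = residues α z →
        (truncate (k.1 * X * k.1ᵀ)).charpoly * ∏ j, (Polynomial.X ^ 2 + C (α j)) =
          X.charpoly * Polynomial.X * ∏ i : Fin d, (Polynomial.X ^ 2 + C (z i.succ)) := by
  obtain ⟨A, ev, hA⟩ := exists_orthogonalGroup_eq_conj_diagonal (S := -(X * X)) (by simp [hX])
  have hprod (y : ℝ) (hy : 0 < y) : ∏ i, (y + ev i) = ∏ j, (y + α j) ^ κ j := by
    have heval := congrArg (eval √y) hchar
    rw [eval_pow, eval_charpoly_sq_of_skew hX hA] at heval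
    simpa [eval_prod, Real.sq_sqrt hy.le] using heval
  obtain ⟨l, hl, hcard⟩ := exists_card_fiber_eq_of_prod_add_eq hα.injective hprod
  obtain rfl : (fun i => α (l i)) = ev := funext hl
  refine ⟨l, A, hcard, fun k z hz => ?_⟩
  refine eq_of_infinite_eval_eq _ _ ((Set.Ioi_infinite (0 : ℝ)).mono fun t ht => ?_)
  simpa [eval_prod] using eval_charpoly_truncate_conj_mul hX hα hα₀ hA hz ht

end Truncation

section Alternant

variable {N d : ℕ}

/-- The generalised alternant `det[x_i ^ τ_b]`, whose quotient by the Vandermonde determinant is a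
Schur function with complex exponents. -/
def alternant (τ : Fin N → ℂ) (x : Fin N → ℝ) : ℂ := (of fun b i => (x i : ℂ) ^ τ b).det

lemma measurable_alternant (τ : Fin N → ℂ) : Measurable (alternant τ) := by
  unfold alternant
  simp only [det_apply, of_apply]
  fun_prop

lemma alternant_comp_perm (τ : Fin N → ℂ) (x : Fin N → ℝ) (σ : Equiv.Perm (Fin N)) :
    alternant τ (x ∘ σ) = (Equiv.Perm.sign σ : ℂ) * alternant τ x :=
  det_permute' σ (of fun b i => (x i : ℂ) ^ τ b)

lemma alternant_add_const {x : Fin N → ℝ} (hx : ∀ i, 0 < x i) (τ : Fin N → ℂ) (c : ℂ) :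
    alternant (fun b => τ b + c) x = (∏ i, (x i : ℂ) ^ c) * alternant τ x := by
  rw [alternant, alternant, ← det_mul_row]
  congr 1
  ext b i
  simp only [of_apply]
  rw [Complex.cpow_add _ _ (Complex.ofReal_ne_zero.2 (hx i).ne'), mul_comm]

lemma det_vandermonde_pos {x : Fin N → ℝ} (hx : StrictMono x) : 0 < (vandermonde x).det := by
  rw [det_vandermonde]
  exact Finset.prod_pos fun i _ => Finset.prod_pos fun j hj =>
    sub_pos.2 (hx (Finset.mem_Ioi.1 hj))

lemma measurable_det_vandermonde : Measurable fun x : Fin N → ℝ => (vandermonde x).det := by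
  simp only [det_vandermonde]
  fun_prop

lemma det_vandermonde_cons_zero (x : Fin N → ℝ) :
    (vandermonde (Fin.cons 0 x : Fin (N + 1) → ℝ)).det = (∏ i, x i) * (vandermonde x).det := by
  simp only [det_vandermonde, Fin.prod_univ_succ, Fin.prod_Ioi_zero, Fin.prod_Ioi_succ,
    Fin.cons_zero, Fin.cons_succ, sub_zero]

lemma det_sub_castSucc_eq_det_snoc_one {R : Type*} [CommRing R] (f : Fin d → Fin (d + 1) → R) :
    (of fun b i : Fin d => f b i.succ - f b i.castSucc).det =
      (-1) ^ d * (of (Fin.snoc f 1 : Fin (d + 1) → Fin (d + 1) → R)).det := by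
  set B : Matrix (Fin (d + 1)) (Fin (d + 1)) R := of (Fin.snoc f 1 : Fin (d + 1) → _)
  have hcol : B.det = (of fun b j : Fin (d + 1) =>
      (Fin.cons (B b 0) fun i => B b i.succ - B b i.castSucc : Fin (d + 1) → R) j).det :=
    det_eq_of_forall_col_eq_smul_add_pred (fun _ => 1) (fun i => by simp) fun i j => by simp
  rw [hcol, det_succ_row _ (Fin.last d), Fin.sum_univ_succ,
    Finset.sum_eq_zero fun j _ => by simp [B]]
  simp [B, ← mul_assoc, ← mul_pow, submatrix]

lemma det_sub_castSucc_of_zero {R : Type*} [CommRing R] {f : Fin d → Fin (d + 1) → R}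
    (hf : ∀ b, f b 0 = 0) :
    (of fun b i : Fin d => f b i.succ - f b i.castSucc).det =
      (of fun b i : Fin d => f b i.succ).det := by
  rw [det_sub_castSucc_eq_det_snoc_one, det_succ_column_zero, Fin.sum_univ_castSucc,
    Finset.sum_eq_zero fun j _ => by simp [hf]]
  simp [← mul_assoc, ← mul_pow, submatrix]

lemma det_cpow_sub_cpow_eq_alternant_snoc (τ : Fin d → ℂ) (x : Fin (d + 1) → ℝ) :
    (of fun b i : Fin d => (x i.succ : ℂ) ^ τ b - (x i.castSucc : ℂ) ^ τ b).det =
      (-1) ^ d * alternant (Fin.snoc τ 0) x := by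
  rw [det_sub_castSucc_eq_det_snoc_one fun b j => (x j : ℂ) ^ τ b, alternant]
  congr 2
  ext b j
  refine Fin.lastCases ?_ (fun i => ?_) b <;> simp

lemma det_cpow_sub_cpow_eq_alternant_tail {τ : Fin d → ℂ} (hτ : ∀ b, τ b ≠ 0) {x : Fin (d + 1) → ℝ}
    (hx : x 0 = 0) :
    (of fun b i : Fin d => (x i.succ : ℂ) ^ τ b - (x i.castSucc : ℂ) ^ τ b).det =
      alternant τ (Fin.tail x) :=
  det_sub_castSucc_of_zero (f := fun b j => (x j : ℂ) ^ τ b) fun b => by simp [hx, hτ b]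

lemma integrableOn_Ioo_cpow {a b : ℝ} (hab : a ≤ b) {w : ℂ} (hw : 0 < w.re) :
    IntegrableOn (fun x : ℝ => (x : ℂ) ^ (w - 1)) (Set.Ioo a b) :=
  (intervalIntegrable_iff_integrableOn_Ioo_of_le hab).1
    (intervalIntegral.intervalIntegrable_cpow' (by simpa using hw))

lemma integral_Ioo_cpow {a b : ℝ} (hab : a ≤ b) {w : ℂ} (hw : 0 < w.re) :
    ∫ x : ℝ in Set.Ioo a b, (x : ℂ) ^ (w - 1) = w⁻¹ * ((b : ℂ) ^ w - (a : ℂ) ^ w) := by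
  rw [← integral_Ioc_eq_integral_Ioo, ← intervalIntegral.integral_of_le hab,
    integral_cpow (Or.inl (by simpa using hw)), sub_add_cancel, div_eq_inv_mul]

lemma det_integral_Ioo_cpow {α : Fin (d + 1) → ℝ} (hα : Monotone α) {w : Fin d → ℂ}
    (hw : ∀ b, 0 < (w b).re) :
    (of fun b i : Fin d => ∫ x : ℝ in Set.Ioo (α i.castSucc) (α i.succ), (x : ℂ) ^ (w b - 1)).det =
      (∏ b, (w b)⁻¹) *
        (of fun b i : Fin d => (α i.succ : ℂ) ^ w b - (α i.castSucc : ℂ) ^ w b).det := by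
  simp only [integral_Ioo_cpow (hα (Fin.castSucc_le_succ _)) (hw _)]
  exact det_mul_column (fun b => (w b)⁻¹) _

end Alternant

section CorankOneStep

open Polynomial

variable {m d : ℕ}

lemma tail_mem_interlacing_pos {α : Fin (d + 1) → ℝ} (hα : Monotone α) (hα₀ : 0 ≤ α 0)
    {z : Fin (d + 1) → ℝ} (hz : z ∈ interlacing α) (i : Fin d) : 0 < z i.succ :=
  (hα₀.trans (hα (Fin.zero_le _))).trans_lt (hz.2 i).1

lemma alternant_add_sub_one_of_pos {α₀ : ℝ} {κ : ℕ} (hκα : κ = 2 ∨ α₀ = 0) {x : Fin d → ℝ}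
    (hx : ∀ i, 0 < x i) (τ : Fin d → ℂ) :
    alternant (fun b => τ b + κ / 2 - 1) x =
      ((∏ i, (x i - α₀) ^ ((κ : ℝ) / 2 - 1) : ℝ) : ℂ) * alternant τ x := by
  simp only [add_sub_assoc]
  rw [alternant_add_const hx]
  congr 1
  push_cast
  refine Finset.prod_congr rfl fun i _ => ?_
  rcases hκα with rfl | rfl
  · norm_num
  · rw [sub_zero, Complex.ofReal_cpow (hx i).le]
    push_cast
    rfl

theorem integral_truncate_conj {X : Matrix (Fin (m + 1)) (Fin (m + 1)) ℝ} (hX : Xᵀ = -X)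
    (μ : Measure (OG (m + 1))) [μ.IsMulLeftInvariant] [IsProbabilityMeasure μ]
    {α : Fin (d + 1) → ℝ} (hα : StrictMono α) (hα₀ : 0 ≤ α 0) {κ : ℕ} (hκ : 0 < κ)
    (hκα : κ = 2 ∨ α 0 = 0)
    (hchar : X.charpoly ^ 2 =
      ∏ j, (Polynomial.X ^ 2 + C (α j)) ^ (Fin.cons κ fun _ => 2 : Fin (d + 1) → ℕ) j)
    {τ : Fin d → ℂ} (hτ : ∀ b, 0 < (τ b + κ / 2).re) {F : Matrix (Fin m) (Fin m) ℝ → ℂ} {c : ℂ}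
    (hF : ∀ (Y : Matrix (Fin m) (Fin m) ℝ) (γ : Fin d → ℝ), Yᵀ = -Y → StrictMono γ →
      (∀ i, 0 < γ i) →
      Y.charpoly * ∏ j, (Polynomial.X ^ 2 + C (α j)) =
        X.charpoly * Polynomial.X * ∏ i, (Polynomial.X ^ 2 + C (γ i)) →
      F Y = c * alternant τ γ / (vandermonde γ).det) :
    ∫ k : OG (m + 1), F (truncate (k.1 * X * k.1ᵀ)) ∂μ =
      (kernelConst d (κ / 2) : ℂ) *
        (((∏ i : Fin d, (α i.succ - α 0) ^ (1 - (κ : ℝ) / 2)) / (vandermonde α).det : ℝ) : ℂ) *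
        c * ((∏ b, (τ b + κ / 2)⁻¹) * (of fun b i : Fin d =>
          (α i.succ : ℂ) ^ (τ b + κ / 2) - (α i.castSucc : ℂ) ^ (τ b + κ / 2)).det) := by
  obtain ⟨l, A, hcard, htrunc⟩ := exists_charpoly_truncate_conj_mul hX hα hα₀ hchar
  have hmono {z : Fin (d + 1) → ℝ} (hz : z ∈ interlacing α) :
      StrictMono fun i : Fin d => z i.succ :=
    strictMono_tail_of_mem_interlacing hα.monotone hz
  have hpos {z : Fin (d + 1) → ℝ} (hz : z ∈ interlacing α) (i : Fin d) : 0 < z i.succ :=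
    tail_mem_interlacing_pos hα.monotone hα₀ hz i
  have hskew (k : OG (m + 1)) :
      (truncate (k.1 * X * k.1ᵀ))ᵀ = -truncate (k.1 * X * k.1ᵀ) :=
    congrArg truncate (conj_transpose_of_skew hX k)
  have hg : Measurable fun γ : Fin d → ℝ => c * alternant τ γ / ((vandermonde γ).det : ℂ) :=
    ((measurable_alternant τ).const_mul c).div
      (Complex.measurable_ofReal.comp measurable_det_vandermonde)
  rw [integral_eq_det_of_blockWeights hκ (hcard 0) (fun j => hcard j.succ)
    (by rw [single_one_dotProduct, Pi.single_eq_same]) hα hg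
    (fun k z hz hk => hF _ _ (hskew k) (hmono hz) (hpos hz) (htrunc k z hk))
    (fun b i => integrableOn_Ioo_cpow (hα (Fin.castSucc_lt_succ)).le (hτ b)) (C := c)
    (fun z hz => ?_), det_integral_Ioo_cpow hα.monotone hτ, abs_of_pos (det_vandermonde_pos hα)]
  have hV : ((vandermonde fun i : Fin d => z i.succ).det : ℂ) ≠ 0 :=
    Complex.ofReal_ne_zero.2 (det_vandermonde_pos (hmono hz)).ne'
  rw [abs_of_pos (det_vandermonde_pos (hmono hz)), ← alternant,
    alternant_add_sub_one_of_pos hκα (hpos hz), Complex.ofReal_mul]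
  field_simp

end CorankOneStep

section SphericalConstant

open Polynomial

variable {m n : ℕ} {e : ℕ → ℂ}

lemma cpw_of_pos {t : ℝ} (ht : 0 < t) (w : ℂ) : cpw t w = (t : ℂ) ^ w := by
  rw [cpw, if_neg ht.ne', Complex.cpow_def_of_ne_zero (Complex.ofReal_ne_zero.2 ht.ne'),
    ← Complex.ofReal_log ht.le, mul_comm]

lemma cpw_prod_of_pos {ι : Type*} (s : Finset ι) {x : ι → ℝ} (hx : ∀ i ∈ s, 0 < x i) (w : ℂ) :
    cpw (∏ i ∈ s, x i) w = ∏ i ∈ s, (x i : ℂ) ^ w := by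
  rw [cpw, if_neg (Finset.prod_pos hx).ne', Real.log_prod fun i hi => (hx i hi).ne',
    Complex.ofReal_sum, Finset.mul_sum, Complex.exp_sum]
  exact Finset.prod_congr rfl fun i hi => by
    rw [← cpw_of_pos (hx i hi), cpw, if_neg (hx i hi).ne']

/-- `X` is skew-symmetric with eigenvalues `±i√β₁, …, ±i√βₙ` and `m - 2n` further zeros. -/
structure IsSkewWithSpectrum (X : Matrix (Fin m) (Fin m) ℝ) (β : Fin n → ℝ) : Prop where
  transpose_eq : Xᵀ = -X
  charpoly_eq : X.charpoly = Polynomial.X ^ (m - 2 * n) * ∏ i, (Polynomial.X ^ 2 + C (β i))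

lemma IsSkewWithSpectrum.det_eq {X : Matrix (Fin (2 * n)) (Fin (2 * n)) ℝ} {β : Fin n → ℝ}
    (hX : IsSkewWithSpectrum X β) : X.det = ∏ i, β i := by
  rw [det_eq_sign_charpoly_coeff, coeff_zero_eq_eval_zero, hX.charpoly_eq]
  simp [eval_prod]

/-- The exponents `e_b + ⋯ + e_{n-1} + (n - b - 1)` of the alternant that evaluates
`minorPowerMean`; for the exponents of `sphInt` they are `(s_b + n - 1) / 2`. -/
def tailExponent (n : ℕ) (e : ℕ → ℂ) (b : Fin n) : ℂ := ∑ j ∈ Finset.Ico (b : ℕ) n, (e j + 1) - 1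

lemma tailExponent_succ (n : ℕ) (e : ℕ → ℂ) :
    tailExponent (n + 1) e =
      fun b => (Fin.snoc (fun b => tailExponent n e b + 1) 0 : Fin (n + 1) → ℂ) b + e n := by
  ext b
  refine Fin.lastCases ?_ (fun b => ?_) b
  · simp [tailExponent]
  · rw [Fin.snoc_castSucc, tailExponent, Fin.val_castSucc, Finset.sum_Ico_succ_top b.2.le,
      tailExponent]
    ring

lemma tailExponent_re_nonneg (he : ∀ j < n, 0 ≤ (e j).re) (b : Fin n) :
    0 ≤ (tailExponent n e b).re := by
  have hrest : 0 ≤ (∑ j ∈ Finset.Ico (b + 1 : ℕ) n, (e j + 1)).re := by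
    rw [Complex.re_sum]
    refine Finset.sum_nonneg fun j hj => ?_
    simpa using add_nonneg (he j (Finset.mem_Ico.1 hj).2) zero_le_one
  rw [tailExponent, Finset.sum_eq_sum_Ico_succ_bot b.2, add_right_comm, add_sub_cancel_right,
    Complex.add_re]
  exact add_nonneg (he b b.2) hrest

lemma tailExponent_add_ne_zero (he : ∀ j < n, 0 ≤ (e j).re) (b : Fin n) {q : ℂ} (hq : 0 < q.re) :
    tailExponent n e b + q ≠ 0 := fun h => by
  have hre := congrArg Complex.re h
  rw [Complex.add_re, Complex.zero_re] at hre
  linarith [tailExponent_re_nonneg he b]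

/-- The constant `c` evaluates `minorPowerMean` with exponents `e` on skew-symmetric matrices with
simple nonzero spectrum, for all invariant probability measures. -/
def IsSphericalConst (hn : 2 * n ≤ m) (e : ℕ → ℂ) (c : ℂ) : Prop :=
  ∀ (μ : Measure (OG m)) [μ.IsMulLeftInvariant] [IsProbabilityMeasure μ]
    (X : Matrix (Fin m) (Fin m) ℝ) (β : Fin n → ℝ), IsSkewWithSpectrum X β → StrictMono β →
    (∀ i, 0 < β i) →
    minorPowerMean hn e μ X = c * alternant (tailExponent n e) β / (vandermonde β).det

lemma prod_rpow_mul_alternant_add {x : Fin n → ℝ} (hx : ∀ i, 0 < x i) (τ : Fin n → ℂ) (q : ℝ) :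
    ((∏ i, x i ^ (1 - q) : ℝ) : ℂ) * alternant (fun b => τ b + q) x =
      (∏ i, (x i : ℂ)) * alternant τ x := by
  rw [alternant_add_const hx, ← mul_assoc, Complex.ofReal_prod, ← Finset.prod_mul_distrib]
  congr 1
  refine Finset.prod_congr rfl fun i _ => ?_
  rw [← Complex.ofReal_cpow (hx i).le, ← Complex.ofReal_mul, ← Real.rpow_add (hx i),
    sub_add_cancel, Real.rpow_one]

lemma prod_X_sq_add_C_ne_zero (α : Fin n → ℝ) : ∏ i, (Polynomial.X ^ 2 + C (α i)) ≠ 0 :=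
  Finset.prod_ne_zero_iff.2 fun i _ => X_pow_add_C_ne_zero two_pos (α i)

lemma IsSphericalConst.odd {c : ℂ} (hc : IsSphericalConst (le_refl (2 * n)) e c)
    (he : ∀ j < n, 0 ≤ (e j).re) :
    IsSphericalConst (Nat.le_succ (2 * n)) e
      (kernelConst n (1 / 2) * c * ∏ b, (tailExponent n e b + 1 / 2)⁻¹) := by
  intro μ _ _ X β hX hβ hβ₀
  obtain ⟨ν, _, _⟩ := exists_isMulLeftInvariant_isProbabilityMeasure (2 * n)
  have hα : StrictMono (Fin.cons 0 β : Fin (n + 1) → ℝ) :=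
    Fin.strictMono_cons.2 ⟨hβ₀, hβ⟩
  have hchar : X.charpoly = Polynomial.X * ∏ i, (Polynomial.X ^ 2 + C (β i)) := by
    simpa using hX.charpoly_eq
  rw [minorPowerMean_succ le_rfl he μ ν X,
    integral_truncate_conj hX.transpose_eq μ hα le_rfl one_pos (.inr rfl) (c := c)
    (τ := tailExponent n e) ?_ ?_ ?_]
  · rw [det_cpow_sub_cpow_eq_alternant_tail ?_ rfl, Fin.tail_cons, det_vandermonde_cons_zero]
    · have hhalf := prod_rpow_mul_alternant_add hβ₀ (tailExponent n e) (1 / 2)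
      have hprod : (∏ i, (β i : ℂ)) ≠ 0 :=
        Finset.prod_ne_zero_iff.2 fun i _ => Complex.ofReal_ne_zero.2 (hβ₀ i).ne'
      have hV : ((vandermonde β).det : ℂ) ≠ 0 :=
        Complex.ofReal_ne_zero.2 (det_vandermonde_pos hβ).ne'
      simp only [Nat.cast_one, Fin.cons_zero, Fin.cons_succ, sub_zero]
      push_cast at hhalf ⊢
      generalize ∏ b, (tailExponent n e b + 1 / 2)⁻¹ = q
      generalize ∏ i, ((β i ^ (1 - 1 / 2 : ℝ) : ℝ) : ℂ) = p at hhalf ⊢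
      generalize alternant (fun b => tailExponent n e b + 1 / 2) β = A at hhalf ⊢
      field_simp
      linear_combination (kernelConst n (1 / 2) * c * q : ℂ) * hhalf
    · simpa using fun b => tailExponent_add_ne_zero he b (q := 1 / 2) (by norm_num)
  · rw [hchar, Fin.prod_univ_succ]
    simp only [Fin.cons_zero, Fin.cons_succ, map_zero, add_zero, Finset.prod_pow]
    ring
  · intro b
    simpa using add_pos_of_nonneg_of_pos (tailExponent_re_nonneg he b) one_half_pos
  · intro Y γ hY hγ hγ₀ h
    refine hc ν Y γ ⟨hY, ?_⟩ hγ hγ₀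
    rw [hchar, Fin.prod_univ_succ] at h
    simp only [Fin.cons_zero, Fin.cons_succ, map_zero, add_zero] at h
    refine mul_right_cancel₀
      (mul_ne_zero (pow_ne_zero 2 Polynomial.X_ne_zero) (prod_X_sq_add_C_ne_zero β)) (h.trans ?_)
    simp only [Nat.sub_self]
    ring

lemma minorPowerMean_top (e : ℕ → ℂ) (μ : Measure (OG (2 * (n + 1))))
    (X : Matrix (Fin (2 * (n + 1))) (Fin (2 * (n + 1))) ℝ) :
    minorPowerMean (le_refl (2 * (n + 1))) e μ X =
      cpw X.det (e n) * minorPowerMean (n := n) (by omega) e μ X := by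
  unfold minorPowerMean
  rw [← integral_const_mul]
  refine integral_congr_ae (.of_forall fun k => ?_)
  have hdet : (k.1 * X * k.1ᵀ).det = X.det := by
    rw [det_mul_right_comm, orthogonalGroup_mul_transpose, one_mul]
  simp only [minorPower, Fin.prod_univ_castSucc]
  rw [mul_comm, ← hdet]
  rfl

lemma IsSphericalConst.even {c : ℂ} (hc : IsSphericalConst (Nat.le_succ (2 * n)) e c)
    (he : ∀ j < n, 0 ≤ (e j).re) :
    IsSphericalConst (le_refl (2 * (n + 1))) e
      (kernelConst n 1 * c * (-1) ^ n * ∏ b, (tailExponent n e b + 1)⁻¹) := by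
  intro μ _ _ X β hX hβ hβ₀
  obtain ⟨ν, _, _⟩ := exists_isMulLeftInvariant_isProbabilityMeasure (2 * n + 1)
  have hchar : X.charpoly = ∏ i, (Polynomial.X ^ 2 + C (β i)) := by
    simpa using hX.charpoly_eq
  have hrec : minorPowerMean (n := n) (by omega) e μ X = _ :=
    minorPowerMean_succ (m := 2 * n + 1) (by omega) he μ ν X
  rw [minorPowerMean_top, hrec, integral_truncate_conj (m := 2 * n + 1) hX.transpose_eq μ hβ
    (hβ₀ 0).le two_pos (.inl rfl) (c := c) (τ := tailExponent n e) ?_ ?_ ?_]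
  · simp only [Nat.cast_ofNat, div_self (two_ne_zero' ℂ), div_self (two_ne_zero' ℝ), sub_self,
      Real.rpow_zero, Finset.prod_const_one]
    rw [det_cpow_sub_cpow_eq_alternant_snoc, tailExponent_succ, alternant_add_const hβ₀, hX.det_eq,
      cpw_prod_of_pos _ fun i _ => hβ₀ i]
    push_cast
    ring
  · rw [hchar, ← Finset.prod_pow]
    exact Finset.prod_congr rfl fun i _ => by refine Fin.cases ?_ (fun i => ?_) i <;> simp
  · intro b
    simpa using add_pos_of_nonneg_of_pos (tailExponent_re_nonneg he b) one_pos
  · intro Y γ hY hγ hγ₀ h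
    refine hc ν Y γ ⟨hY, mul_right_cancel₀ (prod_X_sq_add_C_ne_zero β) (h.trans ?_)⟩ hγ hγ₀
    rw [hchar, Nat.succ_eq_add_one, Nat.add_sub_cancel_left, pow_one]
    ring

/-- The value of `minorPowerMean` on `O(2n)` is `sphericalConst n e` times the quotient of an
alternant by a Vandermonde determinant. The `k`-th factor comes from the two corank-one truncations
from `O(2k + 2)` to `O(2k)`. -/
def sphericalConst (n : ℕ) (e : ℕ → ℂ) : ℂ :=
  ∏ k ∈ Finset.range n, (kernelConst k 1 * kernelConst k (1 / 2) * (-1) ^ k *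
    ∏ b, ((tailExponent k e b + 1 / 2)⁻¹ * (tailExponent k e b + 1)⁻¹))

theorem isSphericalConst_sphericalConst (he : ∀ j, j + 1 < n → 0 ≤ (e j).re) :
    IsSphericalConst (le_refl (2 * n)) e (sphericalConst n e) := by
  induction n with
  | zero =>
    intro μ _ _ X β _ _ _
    simp [minorPowerMean, minorPower, sphericalConst, alternant]
  | succ n ih =>
    have he' : ∀ j < n, 0 ≤ (e j).re := fun j hj => he j (by omega)
    convert ((ih fun j hj => he' j (by omega)).odd he').even he' using 1
    rw [sphericalConst, Finset.prod_range_succ, ← sphericalConst, Finset.prod_mul_distrib]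
    ring

lemma sphericalConst_ne_zero (he : ∀ j, j + 1 < n → 0 ≤ (e j).re) : sphericalConst n e ≠ 0 := by
  refine Finset.prod_ne_zero_iff.2 fun k hk => ?_
  have he' : ∀ j < k, 0 ≤ (e j).re := fun j hj => he j (by have := Finset.mem_range.1 hk; omega)
  have hker {q : ℝ} (hq : 0 < q) : (kernelConst k q : ℂ) ≠ 0 :=
    Complex.ofReal_ne_zero.2 (kernelConst_pos k hq).ne'
  have hlinear (q : ℂ) (hq : 0 < q.re) (b : Fin k) : (tailExponent k e b + q)⁻¹ ≠ 0 :=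
    inv_ne_zero (tailExponent_add_ne_zero he' b hq)
  refine mul_ne_zero (mul_ne_zero (mul_ne_zero (hker one_pos) (hker one_half_pos))
    (pow_ne_zero k (neg_ne_zero.2 one_ne_zero))) (Finset.prod_ne_zero_iff.2 fun b _ => ?_)
  exact mul_ne_zero (hlinear (1 / 2) (by norm_num) b) (hlinear 1 (by norm_num) b)

end SphericalConstant

section BlockDiagonal

open Polynomial

variable {n : ℕ}

lemma vdm_eq_det_vandermonde {R : Type*} [CommRing R] (x : Fin n → R) :
    vdm x = (vandermonde x).det := by
  rw [vdm, det_vandermonde]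
  exact Finset.prod_finset_product _ Finset.univ (fun i => Finset.Ioi i) (by simp)

/-- The bijection `(p, i) ↦ 2i + p` that orders the coordinates by `2 × 2` blocks. -/
def blockIndexEquiv (n : ℕ) : Fin 2 × Fin n ≃ Fin (2 * n) :=
  (Equiv.prodComm _ _).trans (finProdFinEquiv.trans (finCongr (mul_comm n 2)))

lemma Dmat_submatrix_blockIndexEquiv (a : Fin n → ℝ) :
    (Dmat a).submatrix (blockIndexEquiv n) (blockIndexEquiv n) =
      blockDiagonal fun i => !![0, a i; -a i, 0] := by
  have hdiv (p : Fin 2) (i : Fin n) : (blockIndexEquiv n (p, i) : ℕ) / 2 = i := by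
    simp [blockIndexEquiv]; omega
  have hmod (p : Fin 2) (i : Fin n) : (blockIndexEquiv n (p, i) : ℕ) % 2 = p := by
    simp [blockIndexEquiv]; omega
  ext ⟨p, i⟩ ⟨q, j⟩
  simp only [submatrix_apply, Dmat, of_apply, blockDiagonal_apply, hdiv, hmod, Fin.val_inj]
  split_ifs <;> fin_cases p <;> fin_cases q <;> simp_all

lemma transpose_Dmat (a : Fin n → ℝ) : (Dmat a)ᵀ = -Dmat a := by
  apply (reindex (blockIndexEquiv n).symm (blockIndexEquiv n).symm).injective
  simp only [reindex_apply, Equiv.symm_symm, ← transpose_submatrix, submatrix_neg, Pi.neg_apply,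
    Dmat_submatrix_blockIndexEquiv, blockDiagonal_transpose, ← blockDiagonal_neg]
  congr 1
  ext i p q
  fin_cases p <;> fin_cases q <;> simp

lemma charpoly_blockDiagonal {R ι o : Type*} [CommRing R] [Fintype ι] [DecidableEq ι] [Fintype o]
    [DecidableEq o] (M : o → Matrix ι ι R) :
    (blockDiagonal M).charpoly = ∏ i, (M i).charpoly := by
  have h : (blockDiagonal M).charmatrix = blockDiagonal fun i => (M i).charmatrix := by
    ext ⟨p, i⟩ ⟨q, j⟩
    by_cases hij : i = j
    · subst hij; simp [charmatrix_apply, diagonal_apply]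
    · simp [charmatrix_apply_ne, blockDiagonal_apply, hij]
  rw [charpoly, h, det_blockDiagonal]
  rfl

lemma charpoly_Dmat (a : Fin n → ℝ) :
    (Dmat a).charpoly = ∏ i, (Polynomial.X ^ 2 + C (a i ^ 2)) := by
  rw [← charpoly_reindex (blockIndexEquiv n).symm, reindex_apply, Equiv.symm_symm,
    Dmat_submatrix_blockIndexEquiv, charpoly_blockDiagonal]
  refine Finset.prod_congr rfl fun i _ => ?_
  simp [charpoly_fin_two, trace_fin_two, det_fin_two, sq]

lemma isSkewWithSpectrum_Dmat (a : Fin n → ℝ) (σ : Equiv.Perm (Fin n)) :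
    IsSkewWithSpectrum (Dmat a) fun i => a (σ i) ^ 2 := by
  refine ⟨transpose_Dmat a, ?_⟩
  rw [charpoly_Dmat, Nat.sub_self, pow_zero, one_mul,
    Equiv.prod_comp σ fun i => Polynomial.X ^ 2 + C (a i ^ 2)]

lemma continuous_Dmat : Continuous (Dmat : (Fin n → ℝ) → Matrix _ _ ℝ) := by
  refine continuous_matrix fun i j => ?_
  simp only [Dmat, of_apply]
  split_ifs <;> fun_prop

theorem minorPowerMean_Dmat {e : ℕ → ℂ} (he : ∀ j, j + 1 < n → 0 ≤ (e j).re)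
    (μ : Measure (OG (2 * n))) [μ.IsMulLeftInvariant] [IsProbabilityMeasure μ] {a : Fin n → ℝ}
    (ha : ∀ i, 0 < a i) (hinj : Function.Injective a) :
    minorPowerMean (le_refl (2 * n)) e μ (Dmat a) = sphericalConst n e *
      alternant (tailExponent n e) (fun i => a i ^ 2) / (vandermonde fun i => a i ^ 2).det := by
  set σ := Tuple.sort a
  have hmono : StrictMono (a ∘ σ) :=
    (Tuple.monotone_sort a).strictMono_of_injective (hinj.comp σ.injective)
  rw [isSphericalConst_sphericalConst he μ (Dmat a) _ (isSkewWithSpectrum_Dmat a σ)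
    (fun i j hij => pow_lt_pow_left₀ (hmono hij) (ha _).le two_ne_zero) fun i => pow_pos (ha _) 2]
  have halt := alternant_comp_perm (tailExponent n e) (fun i => a i ^ 2) σ
  have hV : (vandermonde fun i => a (σ i) ^ 2).det =
      (Equiv.Perm.sign σ : ℝ) * (vandermonde fun i => a i ^ 2).det :=
    det_permute σ (vandermonde fun i => a i ^ 2)
  rw [Function.comp_def] at halt
  rw [halt, hV]
  obtain h | h := Int.units_eq_one_or (Equiv.Perm.sign σ) <;> simp [h]

end BlockDiagonal

section Confluence

variable {n : ℕ}

lemma tendsto_exp_sub_exp_div (x y : ℂ) :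
    Tendsto (fun h : ℝ => (Complex.exp (h * x) - Complex.exp (h * y)) / h) (𝓝[≠] 0)
      (𝓝 (x - y)) := by
  have hderiv (z : ℂ) : HasDerivAt (fun h : ℝ => Complex.exp (h * z)) z 0 := by
    simpa using ((Complex.ofRealCLM.hasDerivAt (x := 0)).mul_const z).cexp
  refine ((hderiv x).sub (hderiv y)).tendsto_slope_zero.congr fun h => ?_
  simp [div_eq_inv_mul]

lemma tendsto_det_vandermonde_exp_div (x : Fin n → ℂ) {y : Fin n → ℂ} (hy : Function.Injective y) :
    Tendsto (fun h : ℝ => (vandermonde fun i => Complex.exp (h * x i)).det /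
      (vandermonde fun i => Complex.exp (h * y i)).det) (𝓝[≠] 0)
      (𝓝 ((vandermonde x).det / (vandermonde y).det)) := by
  simp only [det_vandermonde, ← Finset.prod_div_distrib]
  refine tendsto_finsetProd _ fun i _ => tendsto_finsetProd _ fun j hj => ?_
  refine ((tendsto_exp_sub_exp_div (x j) (x i)).div (tendsto_exp_sub_exp_div (y j) (y i))
    (sub_ne_zero.2 (hy.ne (Finset.mem_Ioi.1 hj).ne'))).congr' ?_
  filter_upwards [self_mem_nhdsWithin] with h hh
  exact div_div_div_cancel_right₀ (Complex.ofReal_ne_zero.2 hh) _ _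

lemma alternant_exp (τ : Fin n → ℂ) (h : ℝ) :
    alternant τ (fun i => Real.exp (h * i)) =
      (vandermonde fun b => Complex.exp (h * τ b)).det := by
  refine congrArg det (ext fun b i => ?_)
  rw [of_apply, vandermonde_apply, ← cpw_of_pos (Real.exp_pos _), cpw,
    if_neg (Real.exp_pos _).ne', Real.log_exp, ← Complex.exp_nat_mul]
  push_cast
  ring_nf

lemma tendsto_alternant_exp_div (τ : Fin n → ℂ) :
    Tendsto (fun h : ℝ => alternant τ (fun i => Real.exp (h * i)) /
      (vandermonde fun i : Fin n => Real.exp (h * i)).det) (𝓝[≠] 0)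
      (𝓝 ((vandermonde τ).det / (vandermonde fun i : Fin n => (i : ℂ)).det)) := by
  refine (tendsto_det_vandermonde_exp_div τ
    (Nat.cast_injective.comp Fin.val_injective)).congr fun h => ?_
  rw [alternant_exp]
  simp [det_vandermonde]

lemma continuous_minorPowerMean {m : ℕ} (hn : 2 * n ≤ m) {e : ℕ → ℂ}
    (he : ∀ j < n, 0 < (e j).re) (μ : Measure (OG m)) [IsProbabilityMeasure μ] :
    Continuous (minorPowerMean hn e μ) := by
  have hcont : Continuous fun p : Matrix (Fin m) (Fin m) ℝ × OG m =>
      minorPower hn e (p.2.1 * p.1 * p.2.1ᵀ) :=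
    (continuous_minorPower hn he).comp (by fun_prop)
  have : LocallyCompactSpace (Matrix (Fin m) (Fin m) ℝ) :=
    inferInstanceAs (LocallyCompactSpace (Fin m → Fin m → ℝ))
  have : FirstCountableTopology (Matrix (Fin m) (Fin m) ℝ) :=
    inferInstanceAs (FirstCountableTopology (Fin m → Fin m → ℝ))
  unfold minorPowerMean
  simpa using continuous_parametric_integral_of_continuous (μ := μ) hcont isCompact_univ

lemma continuousAt_cpw (w : ℂ) {t : ℝ} (ht : 0 < t) : ContinuousAt (fun t => cpw t w) t := by
  have hev : (fun t : ℝ => (t : ℂ) ^ w) =ᶠ[𝓝 t] fun t => cpw t w := by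
    filter_upwards [lt_mem_nhds ht] with u hu using (cpw_of_pos hu w).symm
  exact (Complex.continuousAt_ofReal_cpow_const t w (.inr ht.ne')).congr hev

lemma continuousAt_minorPowerMean {e : ℕ → ℂ} (he : ∀ j < n, 0 < (e j).re)
    (μ : Measure (OG (2 * (n + 1)))) [IsProbabilityMeasure μ]
    {X : Matrix (Fin (2 * (n + 1))) (Fin (2 * (n + 1))) ℝ} (hX : 0 < X.det) :
    ContinuousAt (minorPowerMean (le_refl (2 * (n + 1))) e μ) X := by
  have hdet : ContinuousAt (fun X : Matrix (Fin (2 * (n + 1))) (Fin (2 * (n + 1))) ℝ =>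
      cpw X.det (e n)) X :=
    (continuousAt_cpw (e n) hX).comp (f := det) (continuous_id.matrix_det).continuousAt
  rw [funext (minorPowerMean_top e μ)]
  exact hdet.mul (continuous_minorPowerMean _ he μ).continuousAt

lemma minorPowerMean_Dmat_one_of_pos {e : ℕ → ℂ} (he : ∀ j < n, 0 < (e j).re)
    (μ : Measure (OG (2 * (n + 1)))) [μ.IsMulLeftInvariant] [IsProbabilityMeasure μ] :
    minorPowerMean (le_refl (2 * (n + 1))) e μ (Dmat fun _ => 1) =
      sphericalConst (n + 1) e * ((vandermonde (tailExponent (n + 1) e)).det /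
        (vandermonde fun i : Fin (n + 1) => (i : ℂ)).det) := by
  set a : ℝ → Fin (n + 1) → ℝ := fun h i => Real.exp (h * i / 2)
  have ha₀ : a 0 = fun _ => 1 := by simp [a]
  have hdet : 0 < (Dmat fun _ : Fin (n + 1) => (1 : ℝ)).det := by
    rw [IsSkewWithSpectrum.det_eq (isSkewWithSpectrum_Dmat _ 1)]
    simp
  have hD : Tendsto (fun h => Dmat (a h)) (𝓝[≠] 0) (𝓝 (Dmat fun _ => 1)) := by
    rw [← ha₀]
    exact (continuous_Dmat.comp (by fun_prop : Continuous a)).continuousAt.tendsto.mono_left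
      nhdsWithin_le_nhds
  refine tendsto_nhds_unique ((continuousAt_minorPowerMean he μ hdet).tendsto.comp hD)
    (((tendsto_alternant_exp_div _).const_mul _).congr' ?_)
  filter_upwards [self_mem_nhdsWithin] with h hh
  have hinj : Function.Injective (a h) := fun i j hij => by
    simpa [a, Fin.val_inj, show h ≠ 0 from hh] using hij
  have hsq : (fun i => a h i ^ 2) = fun i : Fin (n + 1) => Real.exp (h * i) := by
    ext i
    rw [← Real.exp_nat_mul]
    push_cast
    ring_nf
  rw [Function.comp_apply, minorPowerMean_Dmat (fun j hj => (he j (by omega)).le) μ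
    (fun i => Real.exp_pos _) hinj, mul_div_assoc, hsq]

lemma continuous_cpw_exponent (t : ℝ) : Continuous (cpw t) := by
  unfold cpw
  split_ifs <;> fun_prop

section ExponentLimit

variable {α : Type*} {l : Filter α} {E : α → ℕ → ℂ} {e : ℕ → ℂ}

lemma tendsto_minorPowerMean [l.IsCountablyGenerated] {m : ℕ} (hn : 2 * n ≤ m)
    (hE : ∀ᶠ t in l, ∀ j < n, 0 ≤ (E t j).re)
    (hlim : ∀ j < n, Tendsto (fun t => E t j) l (𝓝 (e j)))
    (μ : Measure (OG m)) [IsProbabilityMeasure μ] (X : Matrix (Fin m) (Fin m) ℝ) :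
    Tendsto (fun t => minorPowerMean hn (E t) μ X) l (𝓝 (minorPowerMean hn e μ X)) := by
  obtain ⟨B, hB, hle⟩ := exists_continuous_norm_minorPower_le hn fun j => (e j).re + 1
  have hre : ∀ᶠ t in l, ∀ j < n, (E t j).re ≤ (e j).re + 1 := by
    refine (Set.finite_lt_nat n).eventually_all.2 fun j hj => ?_
    have h := (Complex.continuous_re.tendsto _).comp (hlim j hj)
    exact (h.eventually_lt_const (lt_add_one _)).mono fun t ht => ht.le
  refine tendsto_integral_filter_of_dominated_convergence (fun k => B (k.1 * X * k.1ᵀ))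
    (.of_forall fun t => ?_) ?_ ?_ (.of_forall fun k => ?_)
  · exact ((measurable_minorPower hn (E t)).comp
      (continuous_orthogonalGroup_conj X).measurable).aestronglyMeasurable
  · filter_upwards [hE, hre] with t ht₀ ht₁
    exact .of_forall fun k => hle (E t) (fun j hj => ⟨ht₀ j hj, ht₁ j hj⟩) _
  · exact (hB.comp (continuous_orthogonalGroup_conj X)).integrable_of_hasCompactSupport
      (.of_compactSpace _)
  · exact tendsto_finsetProd _ fun j _ =>
      ((continuous_cpw_exponent _).tendsto _).comp (hlim j j.2)

lemma tendsto_tailExponent (hlim : ∀ j < n, Tendsto (fun t => E t j) l (𝓝 (e j))) (b : Fin n) :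
    Tendsto (fun t => tailExponent n (E t) b) l (𝓝 (tailExponent n e b)) :=
  (tendsto_finsetSum _ fun j hj => (hlim j (Finset.mem_Ico.1 hj).2).add_const 1).sub_const 1

lemma tendsto_sphericalConst (he : ∀ j, j + 1 < n → 0 ≤ (e j).re)
    (hlim : ∀ j, j + 1 < n → Tendsto (fun t => E t j) l (𝓝 (e j))) :
    Tendsto (fun t => sphericalConst n (E t)) l (𝓝 (sphericalConst n e)) := by
  refine tendsto_finsetProd _ fun k hk => Tendsto.const_mul _ (tendsto_finsetProd _ fun b _ => ?_)
  have hlt : ∀ j < k, j + 1 < n := fun j hj => by have := Finset.mem_range.1 hk; omega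
  have hinv (q : ℂ) (hq : 0 < q.re) :
      Tendsto (fun t => (tailExponent k (E t) b + q)⁻¹) l (𝓝 (tailExponent k e b + q)⁻¹) :=
    ((tendsto_tailExponent (fun j hj => hlim j (hlt j hj)) b).add_const q).inv₀
      (tailExponent_add_ne_zero (fun j hj => he j (hlt j hj)) b hq)
  exact (hinv (1 / 2) (by norm_num)).mul (hinv 1 (by norm_num))

end ExponentLimit

theorem minorPowerMean_Dmat_one {e : ℕ → ℂ} (he : ∀ j < n, 0 ≤ (e j).re)
    (μ : Measure (OG (2 * (n + 1)))) [μ.IsMulLeftInvariant] [IsProbabilityMeasure μ] :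
    minorPowerMean (le_refl (2 * (n + 1))) e μ (Dmat fun _ => 1) =
      sphericalConst (n + 1) e * ((vandermonde (tailExponent (n + 1) e)).det /
        (vandermonde fun i : Fin (n + 1) => (i : ℂ)).det) := by
  set E : ℝ → ℕ → ℂ := fun t j => e j + t
  have hpos : ∀ᶠ t in 𝓝[>] (0 : ℝ), ∀ j < n, 0 < (E t j).re := by
    filter_upwards [self_mem_nhdsWithin] with t ht j hj
    simpa [E] using add_pos_of_nonneg_of_pos (he j hj) ht
  have hlim (j : ℕ) : Tendsto (fun t => E t j) (𝓝[>] 0) (𝓝 (e j)) := by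
    have hcont : Continuous fun t => E t j := by fun_prop
    simpa [E] using (hcont.tendsto 0).mono_left (nhdsWithin_le_nhds (s := Set.Ioi 0))
  have hV : Tendsto (fun t => (vandermonde (tailExponent (n + 1) (E t))).det) (𝓝[>] 0)
      (𝓝 (vandermonde (tailExponent (n + 1) e)).det) := by
    simp only [det_vandermonde]
    exact tendsto_finsetProd _ fun i _ => tendsto_finsetProd _ fun j _ =>
      (tendsto_tailExponent (fun k _ => hlim k) j).sub (tendsto_tailExponent (fun k _ => hlim k) i)
  have hmean : Tendsto (fun t => minorPowerMean (le_refl (2 * (n + 1))) (E t) μ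
      (Dmat fun _ => 1)) (𝓝[>] 0)
      (𝓝 (minorPowerMean (le_refl (2 * (n + 1))) e μ (Dmat fun _ => 1))) := by
    simp only [minorPowerMean_top]
    exact (((continuous_cpw_exponent _).tendsto _).comp (hlim n)).mul
      (tendsto_minorPowerMean _ (hpos.mono fun t ht j hj => (ht j hj).le) (fun j _ => hlim j) μ _)
  refine tendsto_nhds_unique hmean (((tendsto_sphericalConst (fun j hj => he j (by omega))
    fun j _ => hlim j).mul (hV.div_const _)).congr' ?_)
  filter_upwards [hpos] with t ht using (minorPowerMean_Dmat_one_of_pos ht μ).symm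

end Confluence

section SphericalFunction

variable {n : ℕ}

/-- The exponents `expo n s` of `sphInt`, indexed by `ℕ` as in `minorPower` and extended by `0`. -/
def sphExponent (n : ℕ) (s : Fin n → ℂ) (j : ℕ) : ℂ := if h : j < n then expo n s ⟨j, h⟩ else 0

lemma sphInt_eq_minorPowerMean (μ : Measure (OG (2 * n))) (s : Fin n → ℂ)
    (X : Matrix (Fin (2 * n)) (Fin (2 * n)) ℝ) :
    sphInt n μ s X = minorPowerMean le_rfl (sphExponent n s) μ X := by
  simp [sphInt, minorPowerMean, minorPower, sphExponent]

lemma sphExponent_re_nonneg {s : Fin n → ℂ}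
    (hre : ∀ j : Fin n, ∀ h : j.val + 1 < n, 2 ≤ (s j - s ⟨j.val + 1, h⟩).re) {j : ℕ}
    (hj : j + 1 < n) : 0 ≤ (sphExponent n s j).re := by
  have h := hre ⟨j, by omega⟩ hj
  rw [sphExponent, dif_pos (by omega), expo, dif_pos hj, Complex.sub_re, Complex.div_ofNat_re,
    Complex.one_re]
  linarith

lemma tailExponent_sphExponent (s : Fin n → ℂ) (b : Fin n) :
    tailExponent n (sphExponent n s) b = (s b + n - 1) / 2 := by
  set t : ℕ → ℂ := fun j => -(if h : j < n then s ⟨j, h⟩ else -(n : ℂ) - 1) / 2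
  have htelescope : ∀ j ∈ Finset.Ico (b : ℕ) n, sphExponent n s j + 1 = t (j + 1) - t j := by
    intro j hj
    simp only [t, sphExponent, expo, (Finset.mem_Ico.1 hj).2, dif_pos]
    ring
  rw [tailExponent, Finset.sum_congr rfl htelescope, Finset.sum_Ico_sub t b.2.le]
  simp only [t, lt_irrefl, b.2, dif_pos, dif_neg, not_false_eq_true, Fin.eta]
  ring

lemma det_vandermonde_mul_add {R : Type*} [CommRing R] (c d : R) (x : Fin n → R) :
    (vandermonde fun i => c * x i + d).det =
      c ^ (∑ i : Fin n, (i : ℕ)) * (vandermonde x).det := by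
  rw [det_vandermonde_add, ← Finset.prod_pow_eq_pow_sum, ← det_mul_row]
  refine congrArg det (ext fun i j => ?_)
  rw [vandermonde_apply, of_apply, vandermonde_apply, mul_pow]

lemma det_vandermonde_natCast (R : Type*) [CommRing R] (n : ℕ) :
    (vandermonde fun i : Fin n => (i : R)).det = ∏ j ∈ Finset.range n, (Nat.factorial j : R) := by
  cases n with
  | zero => simp
  | succ n =>
    rw [det_vandermonde_id_eq_superFactorial, ← Nat.prod_range_factorial_succ,
      Finset.prod_range_succ', Nat.cast_prod]
    simp

lemma det_vandermonde_tailExponent_div (s : Fin n → ℂ) :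
    (vandermonde (tailExponent n (sphExponent n s))).det /
        (vandermonde fun i : Fin n => (i : ℂ)).det =
      vdm s / ((∏ j ∈ Finset.range n, 2 ^ j * Nat.factorial j : ℕ) : ℂ) := by
  have hτ : tailExponent n (sphExponent n s) = fun b => 1 / 2 * s b + (n - 1) / 2 := by
    ext b
    rw [tailExponent_sphExponent]
    ring
  rw [hτ, det_vandermonde_mul_add, det_vandermonde_natCast, vdm_eq_det_vandermonde,
    Finset.prod_mul_distrib, Finset.prod_pow_eq_pow_sum, Fin.sum_univ_eq_sum_range fun i => i]
  push_cast
  rw [one_div, inv_pow, inv_mul_eq_div, div_div]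

lemma alternant_tailExponent_sq {a : Fin n → ℝ} (ha : ∀ i, 0 < a i) (s : Fin n → ℂ) :
    alternant (tailExponent n (sphExponent n s)) (fun i => a i ^ 2) =
      (of fun b c : Fin n => cpw (a c) (s b + (n : ℂ) - 1)).det := by
  refine congrArg det (ext fun b c => ?_)
  rw [of_apply, of_apply, tailExponent_sphExponent, ← cpw_of_pos (pow_pos (ha c) 2), cpw, cpw,
    if_neg (pow_pos (ha c) 2).ne', if_neg (ha c).ne', Real.log_pow]
  push_cast
  ring_nf

end SphericalFunction

/-- Theorem 2.4 of the paper: explicit evaluation of the spherical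
function `Φ(s; D(a)) = f_n(s,D(a))/f_n(s,D(1))`. -/
theorem spherical_function_explicit (n : ℕ) (hn : 1 ≤ n)
    (μ : Measure (OG (2 * n))) (hμ : μ.IsHaarMeasure) (hμ1 : IsProbabilityMeasure μ)
    (a : Fin n → ℝ) (ha : ∀ j, 0 < a j) (ha' : Function.Injective a)
    (s : Fin n → ℂ) (hs : Function.Injective s)
    (hre : ∀ j : Fin n, ∀ h : j.val + 1 < n, 2 ≤ (s j - s ⟨j.val + 1, h⟩).re) :
    sphInt n μ s (Dmat (fun _ => 1)) ≠ 0 ∧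
      sphInt n μ s (Dmat a) / sphInt n μ s (Dmat (fun _ => 1)) =
        ((∏ j ∈ Finset.range n, 2 ^ j * Nat.factorial j : ℕ) : ℂ) *
          (Matrix.of fun b c : Fin n => cpw (a c) (s b + (n : ℂ) - 1)).det /
            (((vdm fun j => (a j) ^ 2 : ℝ) : ℂ) * vdm s) := by
  obtain ⟨n, rfl⟩ := Nat.exists_eq_add_of_le' hn
  have he {j : ℕ} (hj : j + 1 < n + 1) : 0 ≤ (sphExponent (n + 1) s j).re :=
    sphExponent_re_nonneg hre hj
  have hconst : sphericalConst (n + 1) (sphExponent (n + 1) s) ≠ 0 :=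
    sphericalConst_ne_zero fun j => he
  have hvdm : vdm s ≠ 0 := by rwa [vdm_eq_det_vandermonde, det_vandermonde_ne_zero_iff]
  have hone : sphInt (n + 1) μ s (Dmat fun _ => 1) =
      sphericalConst (n + 1) (sphExponent (n + 1) s) *
        (vdm s / ((∏ j ∈ Finset.range (n + 1), 2 ^ j * Nat.factorial j : ℕ) : ℂ)) := by
    rw [sphInt_eq_minorPowerMean, minorPowerMean_Dmat_one (fun j hj => he (by omega)),
      det_vandermonde_tailExponent_div]
  have hfact : ((∏ j ∈ Finset.range (n + 1), 2 ^ j * Nat.factorial j : ℕ) : ℂ) ≠ 0 :=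
    Nat.cast_ne_zero.2 (Finset.prod_ne_zero_iff.2 fun j _ => by positivity)
  rw [hone, sphInt_eq_minorPowerMean, minorPowerMean_Dmat (fun j => he) μ ha ha',
    alternant_tailExponent_sq ha, ← vdm_eq_det_vandermonde]
  refine ⟨mul_ne_zero hconst (div_ne_zero hvdm hfact), ?_⟩
  rw [mul_div_assoc, mul_div_mul_left _ _ hconst, div_div_div_eq, mul_comm (det _)]

end
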